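/- arXiv:1606.05811 — 8 statements merged into one kernel-verified Lean document; each statement's English description precedes it below -/
import Mathlib

section
/- For every rational polyhedron Q ⊆ ℝⁿ there exists a natural number t such that the t-th iterated split closure of Q equals the integer hull of Q, i.e. SC^t(Q) = conv(Q ∩ ℤⁿ). (Equivalently, every rational polyhedron has finite split rank.) -/
open Set

/-- A rational polyhedron in `ℝⁿ`: the solution set of a finite system of linear
inequalities with rational data. -/
def IsRationalPolyhedron {n : ℕ} (Q : Set (Fin n → ℝ)) : Prop :=
  ∃ (m : ℕ) (A : Matrix (Fin m) (Fin n) ℚ) (b : Fin m → ℚ),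
    Q = {x | ∀ i, ∑ j, (A i j : ℝ) * x j ≤ (b i : ℝ)}

/-- The split closure of a set `Q ⊆ ℝⁿ`. -/
def splitClosure {n : ℕ} (Q : Set (Fin n → ℝ)) : Set (Fin n → ℝ) :=
  ⋂ c : Fin n → ℤ,
    convexHull ℝ {x ∈ Q | ∃ z : ℤ, ∑ i, (c i : ℝ) * x i = (z : ℝ)}

/-- The integer hull of a set `Q ⊆ ℝⁿ`: the convex hull of its integral points. -/
def integerHull {n : ℕ} (Q : Set (Fin n → ℝ)) : Set (Fin n → ℝ) :=
  convexHull ℝ {x ∈ Q | ∀ i, ∃ z : ℤ, x i = (z : ℝ)}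

/-! The integer hull of a rational polyhedron `P` is again a rational polyhedron (Meyer), so it is
enough to show that every inequality `β ≤ a ⬝ᵥ x` with integer data that holds at the integer points
of `P` holds on some iterated split closure. The functional `a` is bounded below on `P` unless `P`
has no integer points, and splitting along `a` raises the bound to the next integer as soon as the
slice `a ⬝ᵥ x = k` of an iterate is empty. As iterated split closures commute with taking faces,
this reduces the claim to polyhedra without integer points.

Such a polyhedron is emptied by finitely many split closures. If its equations have no integer
solution, a rational combination of them has integer coefficients and a non-integral right-hand
side, and splitting along this combination leaves nothing. Otherwise some inequality `b ≤ a ⬝ᵥ x`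
has its functional bounded above on `P`, since an integer recession direction strict for all
inequalities would produce integer points of `P`. The integral slices of `P` along `a` are handled
by induction, the inequality having become an equation. -/

namespace SplitRank

section IntegerVectors

variable {ι K : Type*}

/-- The integer vector `v` regarded as a vector over `K`; the embedding of the lattice `ℤ^ι`. -/
def intVec [AddGroupWithOne K] : (ι → ℤ) →+ (ι → K) := (Int.castAddHom K).compLeft ι

@[simp]
lemma intVec_apply [AddGroupWithOne K] (v : ι → ℤ) (i : ι) : (intVec v i : K) = v i := rfl

lemma intVec_smul [Ring K] (k : ℤ) (v : ι → ℤ) : (intVec (k • v) : ι → K) = (k : K) • intVec v := by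
  ext i
  simp

lemma intVec_dotProduct [Fintype ι] [Ring K] (v w : ι → ℤ) :
    (intVec v ⬝ᵥ intVec w : K) = (v ⬝ᵥ w : ℤ) :=
  ((Int.castRingHom K).map_dotProduct v w).symm

@[simp]
lemma intVec_single_one [DecidableEq ι] [Ring K] (i : ι) :
    (intVec (Pi.single i 1) : ι → K) = Pi.single i 1 := by
  ext j
  simp [Pi.single_apply, apply_ite (Int.cast : ℤ → K)]

lemma intVec_vecCons {n : ℕ} [AddGroupWithOne K] (k : ℤ) (v : Fin n → ℤ) :
    (intVec (Matrix.vecCons k v) : Fin (n + 1) → K) = Matrix.vecCons (k : K) (intVec v) := by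
  ext i
  cases i using Fin.cases <;> rfl

end IntegerVectors

section Cones

variable {ι K : Type*} [Field K] [LinearOrder K] [IsStrictOrderedRing K]

variable (K) in
/-- The cone generated by a set of integer rays. -/
def rayCone (G : Set (ι → ℤ)) : PointedCone K (ι → K) :=
  PointedCone.hull K (intVec '' G)

lemma intVec_mem_rayCone {G : Set (ι → ℤ)} {g : ι → ℤ} (hg : g ∈ G) :
    (intVec g : ι → K) ∈ rayCone K G :=
  PointedCone.subset_hull (mem_image_of_mem _ hg)

lemma rayCone_empty : rayCone K (∅ : Set (ι → ℤ)) = ⊥ := by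
  rw [rayCone, image_empty, PointedCone.hull, Submodule.span_empty]

lemma rayCone_union (G H : Set (ι → ℤ)) : rayCone K (G ∪ H) = rayCone K G ⊔ rayCone K H := by
  rw [rayCone, image_union, PointedCone.hull, Submodule.span_union]
  rfl

lemma mem_rayCone_insert {g : ι → ℤ} {G : Set (ι → ℤ)} {x : ι → K} :
    x ∈ rayCone K (insert g G) ↔ ∃ t : K, 0 ≤ t ∧ x - t • intVec g ∈ rayCone K G := by
  rw [rayCone, image_insert_eq, PointedCone.hull, Submodule.mem_span_insert]
  constructor
  · rintro ⟨t, y, hy, rfl⟩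
    exact ⟨t, t.2, by rwa [Nonneg.mk_smul, add_sub_cancel_left]⟩
  · rintro ⟨t, ht, hy⟩
    exact ⟨⟨t, ht⟩, _, hy, by rw [Nonneg.mk_smul, add_sub_cancel]⟩

lemma add_mem_of_convex_of_mem_rayCone [FloorSemiring K] {C : Set (ι → K)} {H : Set (ι → ℤ)}
    (hC : Convex K C) (hH : ∀ h ∈ H, ∀ x ∈ C, x + intVec h ∈ C) {x y : ι → K} (hx : x ∈ C)
    (hy : y ∈ rayCone K H) : x + y ∈ C := by
  induction hy using Submodule.span_induction generalizing x with
  | mem y hy =>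
    obtain ⟨h, hh, rfl⟩ := hy
    exact hH h hh x hx
  | zero => rwa [add_zero]
  | add y z _ _ hy hz =>
    rw [← add_assoc]
    exact hz (hy hx)
  | smul t y _ hy =>
    obtain ⟨t, ht⟩ := t
    have add_nsmul_mem (N : ℕ) : x + N • y ∈ C := by
      induction N with
      | zero => rwa [zero_smul, add_zero]
      | succ N ih =>
        rw [succ_nsmul, ← add_assoc]
        exact hy ih
    have hmem := hC.add_smul_mem (add_nsmul_mem ⌊t⌋₊) (hy (add_nsmul_mem ⌊t⌋₊))
      (t := t - ⌊t⌋₊) ⟨sub_nonneg.2 (Nat.floor_le ht), by linarith [Nat.lt_floor_add_one t]⟩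
    rwa [sub_smul, Nat.cast_smul_eq_nsmul, add_add_sub_cancel] at hmem

variable [Fintype ι]

lemma bddBelow_dotProduct_of_mem_rayCone {A : Set (ι → ℤ)}
    {Q : Set (ι → K)} {y : ι → K} (h : ∀ a ∈ A, BddBelow ((intVec a ⬝ᵥ ·) '' Q))
    (hy : y ∈ rayCone K A) : BddBelow ((y ⬝ᵥ ·) '' Q) := by
  induction hy using Submodule.span_induction with
  | mem y hy =>
    obtain ⟨a, ha, rfl⟩ := hy
    exact h a ha
  | zero => exact ⟨0, forall_mem_image.2 fun x _ => (zero_dotProduct x).ge⟩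
  | add y z _ _ hy hz =>
    obtain ⟨r, hr⟩ := hy
    obtain ⟨s, hs⟩ := hz
    refine ⟨r + s, forall_mem_image.2 fun x hx => ?_⟩
    rw [add_dotProduct]
    exact add_le_add (hr (mem_image_of_mem _ hx)) (hs (mem_image_of_mem _ hx))
  | smul t y _ hy =>
    obtain ⟨r, hr⟩ := hy
    refine ⟨t * r, forall_mem_image.2 fun x hx => ?_⟩
    rw [← Nonneg.coe_smul, smul_dotProduct, smul_eq_mul]
    exact mul_le_mul_of_nonneg_left (hr (mem_image_of_mem _ hx)) t.2

variable (K) in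
/-- The polyhedral cone `{x | 0 ≤ a ⬝ᵥ x for all a ∈ A}` cut out by integer normals. -/
def halfspaceCone (A : Set (ι → ℤ)) : PointedCone K (ι → K) :=
  PointedCone.dual (dotProductBilin K K) (intVec '' A)

lemma mem_halfspaceCone {A : Set (ι → ℤ)} {x : ι → K} :
    x ∈ halfspaceCone K A ↔ ∀ a ∈ A, 0 ≤ intVec a ⬝ᵥ x :=
  Set.forall_mem_image

lemma halfspaceCone_eq_dual_rayCone (A : Set (ι → ℤ)) :
    halfspaceCone K A = PointedCone.dual (dotProductBilin K K) (rayCone K A) :=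
  (PointedCone.dual_hull _).symm

lemma intVec_mem_halfspaceCone {A : Set (ι → ℤ)} {v : ι → ℤ} :
    intVec v ∈ halfspaceCone K A ↔ ∀ a ∈ A, 0 ≤ a ⬝ᵥ v := by
  simp only [mem_halfspaceCone, intVec_dotProduct, Int.cast_nonneg_iff]

lemma exists_nonneg_forall_mul_le_iff {κ : Type*} (A : Finset κ) (α β : κ → K) :
    (∃ t, 0 ≤ t ∧ ∀ a ∈ A, t * α a ≤ β a) ↔
      (∀ a ∈ A, 0 ≤ α a → 0 ≤ β a) ∧
        ∀ a ∈ A, ∀ b ∈ A, 0 < α a → α b < 0 → 0 ≤ α a * β b - α b * β a := by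
  constructor
  · rintro ⟨t, ht, h⟩
    refine ⟨fun a ha hα => (mul_nonneg ht hα).trans (h a ha), fun a ha b hb hαa hαb => ?_⟩
    have ha' := mul_le_mul_of_nonneg_left (h a ha) (neg_nonneg.2 hαb.le)
    have hb' := mul_le_mul_of_nonneg_left (h b hb) hαa.le
    linear_combination ha' + hb'
  · rintro ⟨hnonneg, hpair⟩
    let lower : Finset K := insert 0 ({b ∈ A | α b < 0}.image fun b => β b / α b)
    have hlower : lower.Nonempty := Finset.insert_nonempty _ _
    have hle : ∀ s ∈ lower, s ≤ lower.max' hlower := lower.le_max'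
    have hmax := lower.max'_mem hlower
    simp only [lower, Finset.forall_mem_insert, Finset.forall_mem_image, Finset.mem_filter,
      and_imp] at hle
    refine ⟨lower.max' hlower, hle.1, fun a ha => ?_⟩
    rcases lt_or_ge (α a) 0 with hαa | hαa
    · exact (div_le_iff_of_neg hαa).1 (hle.2 ha hαa)
    obtain hzero | ⟨b, ⟨hb, hαb⟩, hbt⟩ : lower.max' hlower = 0 ∨
        ∃ b, (b ∈ A ∧ α b < 0) ∧ β b / α b = lower.max' hlower := by
      simpa only [lower, Finset.mem_insert, Finset.mem_image, Finset.mem_filter] using hmax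
    · simpa [hzero] using hnonneg a ha hαa
    rcases hαa.eq_or_lt with hzero | hpos
    · simpa [← hzero] using hnonneg a ha hαa
    · rw [← hbt, div_mul_eq_mul_div, div_le_iff_of_neg hαb]
      linear_combination hpair a ha b hb hpos hαb

lemma exists_mem_halfspaceCone_iff_exists_sub_smul_mem (A : Finset (ι → ℤ)) (g : ι → ℤ) :
    ∃ B : Finset (ι → ℤ), ∀ x : ι → K,
      x ∈ halfspaceCone K B ↔ ∃ t : K, 0 ≤ t ∧ x - t • intVec g ∈ halfspaceCone K A := by
  classical
  -- Fourier–Motzkin elimination of `t`.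
  refine ⟨{a ∈ A | 0 ≤ a ⬝ᵥ g} ∪ {p ∈ A ×ˢ A | 0 < p.1 ⬝ᵥ g ∧ p.2 ⬝ᵥ g < 0}.image
    fun p => (p.1 ⬝ᵥ g) • p.2 - (p.2 ⬝ᵥ g) • p.1, fun x => ?_⟩
  have key := exists_nonneg_forall_mul_le_iff A (fun a => ((a ⬝ᵥ g : ℤ) : K))
    fun a => intVec a ⬝ᵥ x
  simp only [mem_halfspaceCone, dotProduct_sub, dotProduct_smul, intVec_dotProduct, smul_eq_mul,
    sub_nonneg, SetLike.mem_coe, Finset.forall_mem_union, Finset.forall_mem_image] at key ⊢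
  rw [key]
  simp only [Finset.mem_filter, Finset.mem_product, and_imp, Prod.forall, Int.cast_nonneg_iff,
    Int.cast_pos, Int.cast_lt_zero, map_sub, intVec_smul, sub_dotProduct, smul_dotProduct,
    smul_eq_mul, sub_nonneg]
  exact and_congr_right' ⟨fun h a ha b hb => h a b ha hb, fun h a b ha hb => h a ha b hb⟩

lemma exists_rayCone_eq_halfspaceCone (G : Finset (ι → ℤ)) :
    ∃ A : Finset (ι → ℤ), rayCone K (G : Set (ι → ℤ)) = halfspaceCone K A := by
  classical
  induction G using Finset.induction_on with
  | empty =>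
    refine ⟨Finset.univ.image (fun i => Pi.single i 1) ∪
      Finset.univ.image (fun i => -Pi.single i 1), ?_⟩
    ext x
    simp only [Finset.coe_empty, rayCone_empty, Submodule.mem_bot, mem_halfspaceCone,
      SetLike.mem_coe, Finset.forall_mem_union, Finset.forall_mem_image, Finset.mem_univ,
      forall_true_left, map_neg, intVec_single_one, neg_dotProduct, single_one_dotProduct,
      Left.nonneg_neg_iff]
    exact ⟨fun h => by simp [h], fun h => funext fun i => le_antisymm (@h.2 i) (@h.1 i)⟩
  | insert g G _ ih =>
    obtain ⟨A, hA⟩ := ih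
    obtain ⟨B, hB⟩ := exists_mem_halfspaceCone_iff_exists_sub_smul_mem (K := K) A g
    refine ⟨B, ?_⟩
    ext x
    rw [hB, ← hA, Finset.coe_insert, mem_rayCone_insert]

lemma dual_dual_halfspaceCone (A : Set (ι → ℤ)) :
    PointedCone.dual (dotProductBilin K K) (PointedCone.dual (dotProductBilin K K)
      (halfspaceCone K A : Set (ι → K))) = halfspaceCone K A := by
  have flip_eq : (dotProductBilin K K : (ι → K) →ₗ[K] _).flip = dotProductBilin K K :=
    LinearMap.ext₂ fun x y => dotProduct_comm y x
  simpa only [halfspaceCone, flip_eq] using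
    PointedCone.dual_dual_flip_dual (p := dotProductBilin K K) (intVec '' A : Set (ι → K))

lemma exists_halfspaceCone_eq_rayCone (A : Finset (ι → ℤ)) :
    ∃ G : Finset (ι → ℤ), halfspaceCone K (A : Set (ι → ℤ)) = rayCone K G := by
  obtain ⟨G, hG⟩ := exists_rayCone_eq_halfspaceCone (K := K) A
  obtain ⟨B, hB⟩ := exists_rayCone_eq_halfspaceCone (K := K) G
  refine ⟨G, ?_⟩
  rw [halfspaceCone_eq_dual_rayCone, hG, halfspaceCone_eq_dual_rayCone, hB,
    dual_dual_halfspaceCone]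

lemma intVec_mem_rayCone_of_forall_dotProduct_nonneg {A : Finset (ι → ℤ)} {a : ι → ℤ}
    (h : ∀ v : ι → ℤ, (∀ a' ∈ A, 0 ≤ a' ⬝ᵥ v) → 0 ≤ a ⬝ᵥ v) :
    (intVec a : ι → K) ∈ rayCone K (A : Set (ι → ℤ)) := by
  obtain ⟨B, hB⟩ := exists_rayCone_eq_halfspaceCone (K := K) A
  have nonneg_of_mem : ∀ a' ∈ A, ∀ b ∈ B, 0 ≤ b ⬝ᵥ a' := fun a' ha' =>
    intVec_mem_halfspaceCone.1 (hB ▸ intVec_mem_rayCone ha' : intVec a' ∈ halfspaceCone K _)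
  rw [hB, intVec_mem_halfspaceCone]
  intro b hb
  rw [dotProduct_comm]
  exact h b fun a' ha' => dotProduct_comm b a' ▸ nonneg_of_mem a' ha' b hb

end Cones

section Homogenization

open Matrix Pointwise

variable {n : ℕ} {K : Type*} [Field K] [LinearOrder K] [IsStrictOrderedRing K]

lemma vecCons_one_mem_rayCone_iff {F : Finset (Fin n → ℤ)} {x : Fin n → K} :
    vecCons 1 x ∈ rayCone K (vecCons 1 '' (F : Set (Fin n → ℤ))) ↔
      x ∈ convexHull K (intVec '' (F : Set (Fin n → ℤ))) := by
  constructor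
  · intro hx
    rw [rayCone, image_image, PointedCone.hull,
      Submodule.mem_span_image_finset_iff_exists_fun'] at hx
    obtain ⟨t, ht⟩ := hx
    simp only [intVec_vecCons, Int.cast_one, ← Nonneg.coe_smul, smul_cons, smul_eq_mul,
      mul_one] at ht
    have hsum : ∑ f ∈ F, (t f : K) = 1 := by simpa using congrFun ht 0
    have hcomb : ∑ f ∈ F, (t f : K) • intVec f = x := by
      ext i
      simpa using congrFun ht i.succ
    rw [← hcomb]
    exact (convex_convexHull K _).sum_mem (fun f _ => (t f).2) hsum fun f hf =>
      subset_convexHull K _ (mem_image_of_mem _ hf)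
  · suffices h : convexHull K (intVec '' (F : Set (Fin n → ℤ))) ⊆
        {x | vecCons 1 x ∈ rayCone K (vecCons 1 '' (F : Set (Fin n → ℤ)))} from fun hx => h hx
    refine convexHull_min ?_ fun x hx y hy p q hp hq hpq => ?_
    · rintro _ ⟨f, hf, rfl⟩
      have := intVec_mem_rayCone (K := K) (mem_image_of_mem (vecCons 1) hf)
      rwa [intVec_vecCons, Int.cast_one] at this
    · have := (rayCone K (vecCons 1 '' (F : Set (Fin n → ℤ)))).convex hx hy hp hq hpq
      rwa [SetLike.mem_coe, smul_cons, smul_cons, cons_add_cons, smul_eq_mul, smul_eq_mul, mul_one,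
        mul_one, hpq] at this

lemma rayCone_image_vecCons_zero (H : Set (Fin n → ℤ)) :
    (rayCone K (vecCons 0 '' H) : Set (Fin (n + 1) → K)) = vecCons 0 '' rayCone K H := by
  have := congrArg SetLike.coe (Submodule.map_span
    (LinearMap.vecCons (R := {c : K // 0 ≤ c}) 0 LinearMap.id) (intVec '' H : Set (Fin n → K)))
  rw [Submodule.map_coe, image_image] at this
  rw [rayCone, image_image]
  simp only [intVec_vecCons, Int.cast_zero]
  exact this.symm

lemma mem_convexHull_add_rayCone_iff {F : Finset (Fin n → ℤ)} {H : Set (Fin n → ℤ)}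
    {x : Fin n → K} :
    x ∈ convexHull K (intVec '' (F : Set (Fin n → ℤ))) + (rayCone K H : Set (Fin n → K)) ↔
      vecCons 1 x ∈ rayCone K (vecCons 1 '' (F : Set (Fin n → ℤ)) ∪ vecCons 0 '' H) := by
  rw [rayCone_union, Submodule.mem_sup, mem_add]
  constructor
  · rintro ⟨y, hy, h, hh, rfl⟩
    refine ⟨_, vecCons_one_mem_rayCone_iff.2 hy, vecCons 0 h, ?_, by simp⟩
    exact (rayCone_image_vecCons_zero H).ge (mem_image_of_mem _ hh)
  · rintro ⟨u, hu, v, hv, huv⟩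
    obtain ⟨h, hh, rfl⟩ := (rayCone_image_vecCons_zero H).le hv
    obtain rfl : u = vecCons 1 (x - h) := by
      rw [← sub_eq_iff_eq_add.2 huv.symm]
      simp
    exact ⟨x - h, vecCons_one_mem_rayCone_iff.1 hu, h, hh, sub_add_cancel x h⟩

end Homogenization

section Lattices

open Matrix

variable {κ ι : Type*} [Fintype κ] [Fintype ι]

lemma exists_rat_forall_mem_dotProduct_integral {L : AddSubgroup (κ → ℤ)} {f : κ → ℤ}
    (hf : f ∉ L) :
    ∃ y : κ → ℚ, (∀ v ∈ L, ∃ z : ℤ, y ⬝ᵥ intVec v = z) ∧ ¬∃ z : ℤ, y ⬝ᵥ intVec f = z := by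
  classical
  have hne : (QuotientAddGroup.mk' L f : (κ → ℤ) ⧸ L) ≠ 0 := by
    rwa [QuotientAddGroup.mk'_apply, Ne, QuotientAddGroup.eq_zero_iff]
  -- Characters `ℤ^κ / L → ℚ/ℤ` separate points; `y` lifts the values on the unit vectors.
  obtain ⟨χ, hχ⟩ := CharacterModule.exists_character_apply_ne_zero_of_ne_zero hne
  let ψ : (κ → ℤ) →+ AddCircle (1 : ℚ) := AddMonoidHom.comp χ (QuotientAddGroup.mk' L)
  choose y hy using fun k => QuotientAddGroup.mk_surjective (ψ (Pi.single k 1))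
  have coe_dotProduct (v : κ → ℤ) : ((y ⬝ᵥ intVec v : ℚ) : AddCircle (1 : ℚ)) = ψ v := by
    calc ((y ⬝ᵥ intVec v : ℚ) : AddCircle (1 : ℚ))
        = ∑ k, ((v k • y k : ℚ) : AddCircle (1 : ℚ)) := by
          simp only [dotProduct, intVec_apply, zsmul_eq_mul, mul_comm (y _)]
          exact map_sum (QuotientAddGroup.mk' (AddSubgroup.zmultiples (1 : ℚ))) _ _
      _ = ∑ k, v k • ψ (Pi.single k 1) := by simp only [AddCircle.coe_zsmul, ← hy]
      _ = ψ v := by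
          conv_rhs => rw [pi_eq_sum_univ' v]
          simp only [map_sum, map_zsmul]
  have integral_iff (v : κ → ℤ) : (∃ z : ℤ, y ⬝ᵥ intVec v = z) ↔ ψ v = 0 := by
    rw [← coe_dotProduct, AddCircle.coe_eq_zero_iff]
    simp [eq_comm]
  refine ⟨y, fun v hv => (integral_iff v).2 ?_, fun h => hχ ((integral_iff f).1 h)⟩
  exact (congrArg χ ((QuotientAddGroup.eq_zero_iff v).2 hv)).trans (map_zero χ)

lemma exists_vecMul_eq_intVec_of_forall_mulVec_ne {K : Type*} [Field K] [CharZero K]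
    {M : Matrix κ ι ℤ} {f : κ → ℤ} (h : ∀ x, M *ᵥ x ≠ f) :
    ∃ (y : κ → K) (c : ι → ℤ), y ᵥ* M.map (Int.cast : ℤ → K) = intVec c ∧
      ¬∃ z : ℤ, y ⬝ᵥ intVec f = z := by
  classical
  obtain ⟨y, hy, hf⟩ := exists_rat_forall_mem_dotProduct_integral
    (L := M.mulVecLin.toAddMonoidHom.range) (f := f) fun ⟨x, hx⟩ => h x hx
  have cast_dotProduct (v : κ → ℤ) :
      (fun k => (y k : K)) ⬝ᵥ intVec v = ((y ⬝ᵥ intVec v : ℚ) : K) := by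
    simp [dotProduct]
  choose c hc using fun j => hy (M.col j) ⟨Pi.single j 1, by simp⟩
  refine ⟨fun k => y k, c, funext fun j => ?_, fun ⟨z, hz⟩ => hf ⟨z, ?_⟩⟩
  · rw [intVec_apply, ← Rat.cast_intCast, ← hc, ← cast_dotProduct]
    rfl
  · exact_mod_cast (cast_dotProduct f).symm.trans hz

end Lattices

section HalfSpaces

lemma convex_setOf_le_dotProduct {ι : Type*} [Fintype ι] (v : ι → ℝ) (r : ℝ) :
    Convex ℝ {x | r ≤ v ⬝ᵥ x} :=
  convex_halfSpace_ge (dotProductBilin ℝ ℝ v).isLinear r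

lemma convexHull_inter_setOf_eq_subset {K E : Type*} [Field K] [LinearOrder K]
    [IsStrictOrderedRing K] [AddCommGroup E] [Module K E] {f : E →ₗ[K] K}
    {S : Set E} {k : K} (h : ∀ x ∈ S, k ≤ f x) :
    convexHull K S ∩ {x | f x = k} ⊆ convexHull K (S ∩ {x | f x = k}) := by
  rintro x ⟨hx, hxk⟩
  let U : Set E := {y | k ≤ f y ∧ (f y = k → y ∈ convexHull K (S ∩ {x | f x = k}))}
  have hU : Convex K U := by
    refine convex_iff_forall_pos.2 fun y hy z hz p q hp hq hpq => ?_
    have hfy := mul_nonneg hp.le (sub_nonneg.2 hy.1)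
    have hfz := mul_nonneg hq.le (sub_nonneg.2 hz.1)
    have hf : f (p • y + q • z) - k = p * (f y - k) + q * (f z - k) := by
      rw [map_add, map_smul, map_smul, smul_eq_mul, smul_eq_mul]
      linear_combination k * hpq
    refine ⟨by linarith, fun hk => ?_⟩
    have hfy0 : p * (f y - k) = 0 := by linarith
    have hfz0 : q * (f z - k) = 0 := by linarith
    exact convex_convexHull K _
      (hy.2 (sub_eq_zero.1 ((mul_eq_zero_iff_left hp.ne').1 hfy0)))
      (hz.2 (sub_eq_zero.1 ((mul_eq_zero_iff_left hq.ne').1 hfz0))) hp.le hq.le hpq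
  have hS : S ⊆ U := fun y hy => ⟨h y hy, fun hk => subset_convexHull K _ ⟨hy, hk⟩⟩
  exact (convexHull_min hS hU hx).2 hxk

end HalfSpaces

section SplitClosure

variable {n : ℕ} {Q U : Set (Fin n → ℝ)}

lemma mem_splitClosure {x : Fin n → ℝ} :
    x ∈ splitClosure Q ↔
      ∀ c : Fin n → ℤ, x ∈ convexHull ℝ {y ∈ Q | ∃ z : ℤ, intVec c ⬝ᵥ y = z} :=
  mem_iInter

lemma integerHull_eq_convexHull_inter_range :
    integerHull Q = convexHull ℝ (Q ∩ range intVec) := by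
  refine congrArg _ (Set.ext fun x => and_congr_right' ?_)
  simp [funext_iff, eq_comm, Classical.skolem]

lemma intVec_mem_integerHull {z : Fin n → ℤ} (hz : intVec z ∈ Q) : intVec z ∈ integerHull Q :=
  subset_convexHull ℝ _ ⟨hz, fun i => ⟨z i, rfl⟩⟩

lemma convex_splitClosure (Q : Set (Fin n → ℝ)) : Convex ℝ (splitClosure Q) :=
  convex_iInter fun _ => convex_convexHull _ _

lemma monotone_splitClosure : Monotone (splitClosure (n := n)) := fun _ _ h =>
  iInter_mono fun _ => convexHull_mono fun _ hx => ⟨h hx.1, hx.2⟩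

lemma splitClosure_subset_of_subset_convex (hU : Convex ℝ U) (h : Q ⊆ U) : splitClosure Q ⊆ U :=
  fun _ hx => convexHull_min (fun _ hy => h hy.1) hU (mem_splitClosure.1 hx 0)

lemma iterate_splitClosure_subset_of_subset_convex (hU : Convex ℝ U) (h : Q ⊆ U) (t : ℕ) :
    splitClosure^[t] Q ⊆ U := by
  induction t with
  | zero => exact h
  | succ t ih =>
    rw [Function.iterate_succ_apply']
    exact splitClosure_subset_of_subset_convex hU ih

lemma antitone_iterate_splitClosure (hQ : Convex ℝ Q) : Antitone fun t => splitClosure^[t] Q :=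
  monotone_splitClosure.antitone_iterate_of_map_le
    (splitClosure_subset_of_subset_convex hQ subset_rfl)

lemma convex_iterate_splitClosure (hQ : Convex ℝ Q) (t : ℕ) : Convex ℝ (splitClosure^[t] Q) := by
  cases t with
  | zero => exact hQ
  | succ t => exact Function.iterate_succ_apply' splitClosure t Q ▸ convex_splitClosure _

lemma inter_range_intVec_subset_splitClosure (Q : Set (Fin n → ℝ)) :
    Q ∩ range intVec ⊆ splitClosure Q := by
  rintro _ ⟨hx, z, rfl⟩
  exact mem_splitClosure.2 fun c => subset_convexHull ℝ _ ⟨hx, c ⬝ᵥ z, intVec_dotProduct c z⟩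

lemma inter_range_intVec_subset_iterate_splitClosure (Q : Set (Fin n → ℝ)) (t : ℕ) :
    Q ∩ range intVec ⊆ splitClosure^[t] Q := by
  induction t with
  | zero => exact inter_subset_left
  | succ t ih =>
    rw [Function.iterate_succ_apply']
    exact (subset_inter ih inter_subset_right).trans (inter_range_intVec_subset_splitClosure _)

lemma integerHull_subset_iterate_splitClosure (hQ : Convex ℝ Q) (t : ℕ) :
    integerHull Q ⊆ splitClosure^[t] Q :=
  integerHull_eq_convexHull_inter_range (Q := Q) ▸ convexHull_min
    (inter_range_intVec_subset_iterate_splitClosure Q t) (convex_iterate_splitClosure hQ t)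

lemma splitClosure_inter_setOf_eq_subset {a : Fin n → ℤ} {k : ℝ}
    (h : ∀ x ∈ Q, k ≤ intVec a ⬝ᵥ x) :
    splitClosure Q ∩ {x | intVec a ⬝ᵥ x = k} ⊆ splitClosure (Q ∩ {x | intVec a ⬝ᵥ x = k}) := by
  rintro x ⟨hx, hxk⟩
  refine mem_splitClosure.2 fun c => ?_
  refine convexHull_mono ?_ (convexHull_inter_setOf_eq_subset
    (f := dotProductBilin ℝ ℝ (intVec a)) (fun y hy => h y hy.1) ⟨mem_splitClosure.1 hx c, hxk⟩)
  exact fun y hy => ⟨⟨hy.1.1, hy.2⟩, hy.1.2⟩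

lemma iterate_splitClosure_inter_setOf_eq_subset {a : Fin n → ℤ} {k : ℝ}
    (h : ∀ x ∈ Q, k ≤ intVec a ⬝ᵥ x) (t : ℕ) :
    splitClosure^[t] Q ∩ {x | intVec a ⬝ᵥ x = k} ⊆
      splitClosure^[t] (Q ∩ {x | intVec a ⬝ᵥ x = k}) := by
  induction t with
  | zero => exact subset_rfl
  | succ t ih =>
    rw [Function.iterate_succ_apply', Function.iterate_succ_apply']
    have hle := iterate_splitClosure_subset_of_subset_convex (convex_setOf_le_dotProduct _ k) h t
    exact (splitClosure_inter_setOf_eq_subset hle).trans (monotone_splitClosure ih)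

lemma iterate_splitClosure_succ_subset_setOf_add_one_le {a : Fin n → ℤ} {k : ℤ} {t : ℕ}
    (h : ∀ x ∈ Q, (k : ℝ) ≤ intVec a ⬝ᵥ x)
    (hslice : splitClosure^[t] (Q ∩ {x | intVec a ⬝ᵥ x = k}) = ∅) :
    splitClosure^[t + 1] Q ⊆ {x | ((k + 1 : ℤ) : ℝ) ≤ intVec a ⬝ᵥ x} := by
  rw [Function.iterate_succ_apply']
  intro x hx
  refine convexHull_min ?_ (convex_setOf_le_dotProduct _ _) (mem_splitClosure.1 hx a)
  rintro y ⟨hy, z, hz⟩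
  have hkz : (k : ℝ) ≤ z := hz ▸
    iterate_splitClosure_subset_of_subset_convex (convex_setOf_le_dotProduct _ (k : ℝ)) h t hy
  have hne : z ≠ k := by
    rintro rfl
    exact (hslice.subset (iterate_splitClosure_inter_setOf_eq_subset h t ⟨hy, hz⟩)).elim
  rw [mem_ofPred_eq, hz]
  exact_mod_cast (Int.cast_le.1 hkz).lt_of_ne' hne

lemma exists_iterate_splitClosure_subset_of_slices (hQ : Convex ℝ Q) {a : Fin n → ℤ} {δ : ℤ}
    (hbdd : BddBelow ((intVec a ⬝ᵥ ·) '' Q))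
    (hslice : ∀ k < δ, ∃ t, splitClosure^[t] (Q ∩ {x | intVec a ⬝ᵥ x = (k : ℝ)}) = ∅) :
    ∃ t, splitClosure^[t] Q ⊆ {x | (δ : ℝ) ≤ intVec a ⬝ᵥ x} := by
  obtain ⟨r, hr⟩ := hbdd
  have floor_le : ∀ x ∈ Q, (⌊r⌋ : ℝ) ≤ intVec a ⬝ᵥ x := fun x hx =>
    (Int.floor_le r).trans (hr (mem_image_of_mem _ hx))
  have key : ∀ k, ⌊r⌋ ≤ k → k ≤ δ → ∃ t, splitClosure^[t] Q ⊆ {x | (k : ℝ) ≤ intVec a ⬝ᵥ x} := by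
    intro k hk
    induction k, hk using Int.leInduction with
    | base => exact fun _ => ⟨0, floor_le⟩
    | succ k _ ih =>
      intro hkδ
      obtain ⟨s, hs⟩ := ih (by lia)
      obtain ⟨t, ht⟩ := hslice k (by lia)
      refine ⟨t + 1 + s, ?_⟩
      rw [Function.iterate_add_apply]
      refine iterate_splitClosure_succ_subset_setOf_add_one_le hs (subset_empty_iff.1 ?_)
      refine ht ▸ monotone_splitClosure.iterate t (inter_subset_inter_left _ ?_)
      exact antitone_iterate_splitClosure hQ (Nat.zero_le s)
  rcases le_total ⌊r⌋ δ with h | h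
  · exact key δ h le_rfl
  · exact ⟨0, fun x hx => (Int.cast_le.2 h).trans (floor_le x hx)⟩

end SplitClosure

section IntegralPolyhedra

variable {n : ℕ} {E I : Finset ((Fin n → ℤ) × ℤ)}

/-- The polyhedron cut out by the equations `a ⬝ᵥ x = b` for `(a, b) ∈ E` and the inequalities
`b ≤ a ⬝ᵥ x` for `(a, b) ∈ I`. Equations are kept apart from inequalities because the emptiness
proof turns the latter into the former one at a time. -/
def integralPolyhedron (E I : Finset ((Fin n → ℤ) × ℤ)) : Set (Fin n → ℝ) :=
  {x | (∀ e ∈ E, intVec e.1 ⬝ᵥ x = e.2) ∧ ∀ c ∈ I, (c.2 : ℝ) ≤ intVec c.1 ⬝ᵥ x}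

lemma intVec_mem_integralPolyhedron {z : Fin n → ℤ} :
    intVec z ∈ integralPolyhedron E I ↔
      (∀ e ∈ E, e.1 ⬝ᵥ z = e.2) ∧ ∀ c ∈ I, c.2 ≤ c.1 ⬝ᵥ z := by
  simp only [integralPolyhedron, mem_ofPred_eq, intVec_dotProduct, Int.cast_inj, Int.cast_le]

lemma convex_integralPolyhedron (E I : Finset ((Fin n → ℤ) × ℤ)) :
    Convex ℝ (integralPolyhedron E I) := by
  simp only [integralPolyhedron, ofPred_and, ofPred_forall]
  exact (convex_iInter₂ fun e _ => convex_hyperplane (dotProductBilin ℝ ℝ _).isLinear _).inter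
    (convex_iInter₂ fun c _ => convex_setOf_le_dotProduct _ _)

/-- Integer normals of the recession cone of `integralPolyhedron E I`: that cone is
`halfspaceCone ℝ (recessionNormals E I)`, each equation contributing both of its signs. -/
def recessionNormals (E I : Finset ((Fin n → ℤ) × ℤ)) : Finset (Fin n → ℤ) :=
  I.image Prod.fst ∪ (E.image Prod.fst ∪ E.image fun e => -e.1)

lemma forall_mem_recessionNormals {p : (Fin n → ℤ) → Prop} :
    (∀ a ∈ recessionNormals E I, p a) ↔
      (∀ c ∈ I, p c.1) ∧ (∀ e ∈ E, p e.1) ∧ ∀ e ∈ E, p (-e.1) := by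
  simp only [recessionNormals, Finset.forall_mem_union, Finset.forall_mem_image]

lemma forall_mem_recessionNormals_dotProduct_nonneg {v : Fin n → ℤ} :
    (∀ a ∈ recessionNormals E I, 0 ≤ a ⬝ᵥ v) ↔
      (∀ e ∈ E, e.1 ⬝ᵥ v = 0) ∧ ∀ c ∈ I, 0 ≤ c.1 ⬝ᵥ v := by
  simp only [forall_mem_recessionNormals, neg_dotProduct, Left.nonneg_neg_iff]
  exact ⟨fun h => ⟨fun e he => (h.2.2 e he).antisymm (h.2.1 e he), h.1⟩,
    fun h => ⟨h.2, fun e he => (h.1 e he).ge, fun e he => (h.1 e he).le⟩⟩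

lemma bddBelow_dotProduct_integralPolyhedron {a : Fin n → ℤ}
    (h : ∀ v, (∀ a' ∈ recessionNormals E I, 0 ≤ a' ⬝ᵥ v) → 0 ≤ a ⬝ᵥ v) :
    BddBelow ((intVec a ⬝ᵥ ·) '' integralPolyhedron E I) := by
  have bddBelow_of_mem : ∀ a' ∈ recessionNormals E I,
      BddBelow ((intVec a' ⬝ᵥ ·) '' integralPolyhedron E I) := by
    rw [forall_mem_recessionNormals]
    refine ⟨fun c hc => ⟨c.2, ?_⟩, fun e he => ⟨e.2, ?_⟩, fun e he => ⟨-e.2, ?_⟩⟩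
    · exact forall_mem_image.2 fun x hx => hx.2 c hc
    · exact forall_mem_image.2 fun x hx => (hx.1 e he).ge
    · simp only [map_neg, neg_dotProduct]
      exact forall_mem_image.2 fun x hx => (congrArg Neg.neg (hx.1 e he)).ge
  exact bddBelow_dotProduct_of_mem_rayCone bddBelow_of_mem
    (intVec_mem_rayCone_of_forall_dotProduct_nonneg h)

lemma integralPolyhedron_inter_setOf_eq (a : Fin n → ℤ) (k : ℤ) :
    integralPolyhedron E I ∩ {x | intVec a ⬝ᵥ x = (k : ℝ)} =
      integralPolyhedron (insert (a, k) E) I := by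
  ext x
  simp only [integralPolyhedron, mem_inter_iff, mem_ofPred_eq, Finset.forall_mem_insert]
  tauto

lemma integralPolyhedron_anti_right {I' : Finset ((Fin n → ℤ) × ℤ)} (h : I' ⊆ I) :
    integralPolyhedron E I ⊆ integralPolyhedron E I' :=
  fun _ hx => ⟨hx.1, fun c hc => hx.2 c (h hc)⟩

lemma exists_bddBelow_neg_or_exists_strict_recession (E I : Finset ((Fin n → ℤ) × ℤ)) :
    (∃ c ∈ I, BddBelow ((intVec (-c.1) ⬝ᵥ ·) '' integralPolyhedron E I)) ∨
      ∃ d : Fin n → ℤ, (∀ e ∈ E, e.1 ⬝ᵥ d = 0) ∧ ∀ c ∈ I, 0 < c.1 ⬝ᵥ d := by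
  refine or_iff_not_imp_left.2 fun hunbdd => ?_
  have exists_recession : ∀ c ∈ I, ∃ v : Fin n → ℤ,
      (∀ a ∈ recessionNormals E I, 0 ≤ a ⬝ᵥ v) ∧ 0 < c.1 ⬝ᵥ v := by
    intro c hc
    by_contra! hnone
    refine hunbdd ⟨c, hc, bddBelow_dotProduct_integralPolyhedron fun v hv => ?_⟩
    rw [neg_dotProduct]
    exact neg_nonneg.2 (hnone v hv)
  simp only [forall_mem_recessionNormals_dotProduct_nonneg] at exists_recession
  choose! v hrec hpos using exists_recession
  refine ⟨∑ c ∈ I, v c, fun e he => ?_, fun c hc => ?_⟩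
  · rw [dotProduct_sum]
    exact Finset.sum_eq_zero fun c hc => (hrec c hc).1 e he
  · rw [dotProduct_sum]
    exact Finset.sum_pos' (fun c' hc' => (hrec c' hc').2 c hc) ⟨c, hc, hpos c hc⟩

lemma exists_intVec_mem_integralPolyhedron_of_strict_recession {z d : Fin n → ℤ}
    (hz : ∀ e ∈ E, e.1 ⬝ᵥ z = e.2) (hdE : ∀ e ∈ E, e.1 ⬝ᵥ d = 0) (hdI : ∀ c ∈ I, 0 < c.1 ⬝ᵥ d) :
    ∃ w, intVec w ∈ integralPolyhedron E I := by
  classical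
  obtain ⟨N, hN⟩ := (insert 0 (I.image fun c => c.2 - c.1 ⬝ᵥ z)).exists_le
  simp only [Finset.forall_mem_insert, Finset.forall_mem_image] at hN
  refine ⟨z + N • d, intVec_mem_integralPolyhedron.2 ⟨fun e he => ?_, fun c hc => ?_⟩⟩
  · rw [dotProduct_add, dotProduct_smul, hz e he, hdE e he, smul_zero, add_zero]
  · rw [dotProduct_add, dotProduct_smul, smul_eq_mul]
    linarith [hN.2 hc, le_mul_of_one_le_right hN.1 (hdI c hc)]

lemma splitClosure_eq_empty_of_no_integer_solution {Q : Set (Fin n → ℝ)}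
    (hQ : ∀ x ∈ Q, ∀ e ∈ E, intVec e.1 ⬝ᵥ x = e.2)
    (hE : ¬∃ z : Fin n → ℤ, ∀ e ∈ E, e.1 ⬝ᵥ z = e.2) : splitClosure Q = ∅ := by
  obtain ⟨y, c, hc, hy⟩ := exists_vecMul_eq_intVec_of_forall_mulVec_ne (K := ℝ)
    (M := Matrix.of fun e : E => e.1.1) (f := fun e => e.1.2)
    fun z hz => hE ⟨z, fun e he => congrFun hz ⟨e, he⟩⟩
  have dotProduct_eq : ∀ x ∈ Q, intVec c ⬝ᵥ x = y ⬝ᵥ intVec fun e : E => e.1.2 := by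
    intro x hx
    rw [← hc, ← Matrix.dotProduct_mulVec]
    exact congrArg _ (funext fun e => hQ x hx e e.2)
  have split_eq_empty : {x ∈ Q | ∃ z : ℤ, intVec c ⬝ᵥ x = z} = ∅ :=
    eq_empty_of_forall_notMem fun x ⟨hx, z, hz⟩ => hy ⟨z, (dotProduct_eq x hx).symm.trans hz⟩
  refine eq_empty_of_forall_notMem fun x hx => ?_
  have hx_split := mem_splitClosure.1 hx c
  rwa [split_eq_empty, convexHull_empty] at hx_split

lemma exists_iterate_splitClosure_integralPolyhedron_eq_empty
    (h : ∀ z, intVec z ∉ integralPolyhedron E I) :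
    ∃ t, splitClosure^[t] (integralPolyhedron E I) = ∅ := by
  induction I using Finset.strongInduction generalizing E with
  | H I ih =>
    by_cases hE : ∃ z : Fin n → ℤ, ∀ e ∈ E, e.1 ⬝ᵥ z = e.2
    swap
    · exact ⟨1, splitClosure_eq_empty_of_no_integer_solution (fun x hx => hx.1) hE⟩
    obtain ⟨z, hz⟩ := hE
    rcases exists_bddBelow_neg_or_exists_strict_recession E I with ⟨c, hc, hbdd⟩ | ⟨d, hdE, hdI⟩
    swap
    · obtain ⟨w, hw⟩ := exists_intVec_mem_integralPolyhedron_of_strict_recession hz hdE hdI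
      exact absurd hw (h w)
    -- On each slice `-c.1 ⬝ᵥ x = k` the inequality `c` is implied by the new equation.
    have hslice : ∀ k < -c.2 + 1, ∃ t, splitClosure^[t]
        (integralPolyhedron E I ∩ {x | intVec (-c.1) ⬝ᵥ x = (k : ℝ)}) = ∅ := by
      intro k hk
      have hno : ∀ z, intVec z ∉ integralPolyhedron (insert (-c.1, k) E) (I.erase c) := by
        intro z hz
        rw [intVec_mem_integralPolyhedron, Finset.forall_mem_insert, neg_dotProduct] at hz
        have hcz : c.2 ≤ c.1 ⬝ᵥ z := by lia
        refine h z (intVec_mem_integralPolyhedron.2 ⟨hz.1.2, ?_⟩)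
        rw [← Finset.insert_erase hc]
        exact Finset.forall_mem_insert _ _ _ |>.2 ⟨hcz, hz.2⟩
      obtain ⟨t, ht⟩ := ih _ (Finset.erase_ssubset hc) hno
      rw [integralPolyhedron_inter_setOf_eq]
      exact ⟨t, subset_empty_iff.1 (ht ▸ monotone_splitClosure.iterate t
        (integralPolyhedron_anti_right (Finset.erase_subset c I)))⟩
    have hconvex := convex_integralPolyhedron E I
    obtain ⟨t, ht⟩ := exists_iterate_splitClosure_subset_of_slices hconvex hbdd hslice
    refine ⟨t, eq_empty_of_forall_notMem fun x hx => ?_⟩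
    have hlower := (antitone_iterate_splitClosure hconvex (Nat.zero_le t) hx).2 c hc
    have hupper := ht hx
    simp only [mem_ofPred_eq, map_neg, neg_dotProduct, Int.cast_add, Int.cast_neg,
      Int.cast_one] at hupper
    linarith

lemma intVec_add_mem_integralPolyhedron {z v : Fin n → ℤ}
    (hz : intVec z ∈ integralPolyhedron E I) (hv : ∀ a ∈ recessionNormals E I, 0 ≤ a ⬝ᵥ v) :
    intVec (z + v) ∈ integralPolyhedron E I := by
  rw [intVec_mem_integralPolyhedron] at hz ⊢
  rw [forall_mem_recessionNormals_dotProduct_nonneg] at hv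
  simp only [dotProduct_add]
  exact ⟨fun e he => by rw [hz.1 e he, hv.1 e he, add_zero],
    fun c hc => le_add_of_le_of_nonneg (hz.2 c hc) (hv.2 c hc)⟩

lemma bddBelow_dotProduct_integralPolyhedron_of_intVec_mem {a z : Fin n → ℤ} {β : ℤ}
    (hz : intVec z ∈ integralPolyhedron E I)
    (h : ∀ w, intVec w ∈ integralPolyhedron E I → β ≤ a ⬝ᵥ w) :
    BddBelow ((intVec a ⬝ᵥ ·) '' integralPolyhedron E I) := by
  refine bddBelow_dotProduct_integralPolyhedron fun v hv => ?_
  have along_ray (N : ℕ) : β ≤ a ⬝ᵥ z + N * (a ⬝ᵥ v) := by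
    have hNv : ∀ a' ∈ recessionNormals E I, 0 ≤ a' ⬝ᵥ (N • v) := fun a' ha' =>
      dotProduct_smul N a' v ▸ nsmul_nonneg (hv a' ha') N
    have := h _ (intVec_add_mem_integralPolyhedron hz hNv)
    rwa [dotProduct_add, dotProduct_smul, nsmul_eq_mul] at this
  by_contra! hneg
  have hN := along_ray (a ⬝ᵥ z - β + 1).toNat
  have := Int.self_le_toNat (a ⬝ᵥ z - β + 1)
  nlinarith

lemma exists_iterate_splitClosure_integralPolyhedron_subset_setOf_le {a : Fin n → ℤ} {β : ℤ}
    (h : ∀ z, intVec z ∈ integralPolyhedron E I → β ≤ a ⬝ᵥ z) :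
    ∃ t, splitClosure^[t] (integralPolyhedron E I) ⊆ {x | (β : ℝ) ≤ intVec a ⬝ᵥ x} := by
  by_cases hz : ∃ z, intVec z ∈ integralPolyhedron E I
  · obtain ⟨z, hz⟩ := hz
    refine exists_iterate_splitClosure_subset_of_slices (convex_integralPolyhedron E I)
      (bddBelow_dotProduct_integralPolyhedron_of_intVec_mem hz h) fun k hk => ?_
    rw [integralPolyhedron_inter_setOf_eq]
    refine exists_iterate_splitClosure_integralPolyhedron_eq_empty fun w hw => ?_
    rw [← integralPolyhedron_inter_setOf_eq] at hw
    have hwk : a ⬝ᵥ w = k := by exact_mod_cast (intVec_dotProduct a w).symm.trans hw.2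
    exact hk.not_ge (hwk ▸ h w hw.1)
  · obtain ⟨t, ht⟩ := exists_iterate_splitClosure_integralPolyhedron_eq_empty (not_exists.1 hz)
    exact ⟨t, ht ▸ empty_subset _⟩

end IntegralPolyhedra

section IntegerHull

open Matrix Pointwise

variable {n : ℕ}

lemma exists_convexHull_add_rayCone_eq_integralPolyhedron (F H : Finset (Fin n → ℤ)) :
    ∃ I, convexHull ℝ (intVec '' (F : Set (Fin n → ℤ))) +
      (rayCone ℝ (H : Set (Fin n → ℤ)) : Set (Fin n → ℝ)) = integralPolyhedron ∅ I := by
  classical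
  -- Homogenization: Weyl's theorem for the cone over the polyhedron placed at height one.
  obtain ⟨B, hB⟩ := exists_rayCone_eq_halfspaceCone (K := ℝ)
    (F.image (vecCons 1) ∪ H.image (vecCons 0))
  refine ⟨B.image fun b => (vecTail b, -vecHead b), Set.ext fun x => ?_⟩
  have dotProduct_cons (b : Fin (n + 1) → ℤ) :
      intVec b ⬝ᵥ vecCons 1 x = vecHead b + intVec (vecTail b) ⬝ᵥ x := by
    rw [← cons_head_tail b, intVec_vecCons, cons_dotProduct_cons, mul_one, head_cons, tail_cons]
  rw [mem_convexHull_add_rayCone_iff, ← Finset.coe_image, ← Finset.coe_image, ← Finset.coe_union,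
    hB, mem_halfspaceCone]
  simp [integralPolyhedron, dotProduct_cons, neg_le_iff_add_nonneg']

lemma exists_finset_subset_forall_exists_le {α β : Type*} [PartialOrder β]
    [WellQuasiOrderedLE β] (S : Set α) (s : α → β) :
    ∃ F : Finset α, ↑F ⊆ S ∧ ∀ x ∈ S, ∃ f ∈ F, s f ≤ s x := by
  classical
  have hfin : {b | Minimal (· ∈ s '' S) b}.Finite :=
    WellQuasiOrderedLE.finite_of_isAntichain (setOfPred_minimal_antichain _)
  have hsub : ↑hfin.toFinset ⊆ s '' S := fun b hb => (hfin.mem_toFinset.1 hb).1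
  obtain ⟨F, hFS, hF⟩ := Finset.subset_set_image_iff.1 hsub
  refine ⟨F, hFS, fun x hx => ?_⟩
  obtain ⟨b, hbx, hb⟩ := exists_minimal_le_of_wellFoundedLT (· ∈ s '' S) (s x) ⟨x, hx, rfl⟩
  obtain ⟨f, hf, rfl⟩ := Finset.mem_image.1 (hF ▸ hfin.mem_toFinset.2 hb)
  exact ⟨f, hf, hbx⟩

lemma add_intVec_mem_integerHull {E I : Finset ((Fin n → ℤ) × ℤ)} {v : Fin n → ℤ}
    (hv : ∀ a ∈ recessionNormals E I, 0 ≤ a ⬝ᵥ v) {x : Fin n → ℝ}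
    (hx : x ∈ integerHull (integralPolyhedron E I)) :
    x + intVec v ∈ integerHull (integralPolyhedron E I) := by
  rw [integerHull_eq_convexHull_inter_range] at hx ⊢
  refine convexHull_min ?_ ((convex_convexHull ℝ _).translate_preimage_left _) hx
  rintro _ ⟨hz, z, rfl⟩
  have hmem := intVec_add_mem_integralPolyhedron hz hv
  rw [map_add] at hmem
  exact subset_convexHull ℝ _ ⟨hmem, z + v, map_add _ _ _⟩

lemma exists_finset_forall_intVec_mem_integralPolyhedron_sub (E I : Finset ((Fin n → ℤ) × ℤ)) :
    ∃ F : Finset (Fin n → ℤ), (∀ f ∈ F, intVec f ∈ integralPolyhedron E I) ∧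
      ∀ z, intVec z ∈ integralPolyhedron E I →
        ∃ f ∈ F, ∀ a ∈ recessionNormals E I, 0 ≤ a ⬝ᵥ (z - f) := by
  -- Dickson's lemma for the slack vectors: `z - f` is a recession direction if `f` has less slack.
  obtain ⟨F, hF, hle⟩ := exists_finset_subset_forall_exists_le
    {z : Fin n → ℤ | intVec z ∈ integralPolyhedron E I}
    fun z (c : I) => (c.1.1 ⬝ᵥ z - c.1.2).toNat
  refine ⟨F, hF, fun z hz => ?_⟩
  obtain ⟨f, hf, hfz⟩ := hle z hz
  have hfP := intVec_mem_integralPolyhedron.1 (hF hf)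
  rw [intVec_mem_integralPolyhedron] at hz
  refine ⟨f, hf, forall_mem_recessionNormals_dotProduct_nonneg.2
    ⟨fun e he => ?_, fun c hc => ?_⟩⟩
  · rw [dotProduct_sub, hz.1 e he, hfP.1 e he, sub_self]
  · have := hfz ⟨c, hc⟩
    have := hz.2 c hc
    rw [dotProduct_sub]
    lia

lemma exists_integerHull_integralPolyhedron_eq_convexHull_add_rayCone
    (E I : Finset ((Fin n → ℤ) × ℤ)) :
    ∃ F H : Finset (Fin n → ℤ), integerHull (integralPolyhedron E I) =
      convexHull ℝ (intVec '' (F : Set (Fin n → ℤ))) +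
        (rayCone ℝ (H : Set (Fin n → ℤ)) : Set (Fin n → ℝ)) := by
  obtain ⟨H, hH⟩ := exists_halfspaceCone_eq_rayCone (K := ℝ) (recessionNormals E I)
  obtain ⟨F, hF, hsub⟩ := exists_finset_forall_intVec_mem_integralPolyhedron_sub E I
  refine ⟨F, H, Subset.antisymm ?_ ?_⟩
  · rw [integerHull_eq_convexHull_inter_range]
    refine convexHull_min ?_ ((convex_convexHull ℝ _).add (rayCone ℝ _).convex)
    rintro _ ⟨hz, z, rfl⟩
    obtain ⟨f, hf, hzf⟩ := hsub z hz
    rw [← add_sub_cancel f z, map_add]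
    exact add_mem_add (subset_convexHull ℝ _ (mem_image_of_mem _ hf))
      (hH.le (intVec_mem_halfspaceCone.2 hzf))
  · rintro _ ⟨x, hx, y, hy, rfl⟩
    refine add_mem_of_convex_of_mem_rayCone (convex_convexHull ℝ _) (fun h hh w hw => ?_)
      (convexHull_min ?_ (convex_convexHull ℝ _) hx) hy
    · exact add_intVec_mem_integerHull
        (intVec_mem_halfspaceCone.1 (hH.ge (intVec_mem_rayCone hh))) hw
    · exact image_subset_iff.2 fun f hf => intVec_mem_integerHull (hF f hf)

lemma exists_integerHull_integralPolyhedron_eq_integralPolyhedron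
    (E I : Finset ((Fin n → ℤ) × ℤ)) :
    ∃ I', integerHull (integralPolyhedron E I) = integralPolyhedron ∅ I' := by
  obtain ⟨F, H, hFH⟩ := exists_integerHull_integralPolyhedron_eq_convexHull_add_rayCone E I
  obtain ⟨I', hI'⟩ := exists_convexHull_add_rayCone_eq_integralPolyhedron F H
  exact ⟨I', hFH.trans hI'⟩

end IntegerHull

section RationalPolyhedra

lemma exists_pos_nat_mul_eq_intCast {ι : Type*} [Finite ι] (q : ι → ℚ) :
    ∃ N : ℕ, 0 < N ∧ ∀ i, ∃ z : ℤ, N * q i = z := by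
  cases nonempty_fintype ι
  refine ⟨∏ i, (q i).den, Finset.prod_pos fun i _ => (q i).pos, fun i => ?_⟩
  obtain ⟨k, hk⟩ := Finset.dvd_prod_of_mem (fun i => (q i).den) (Finset.mem_univ i)
  refine ⟨k * (q i).num, ?_⟩
  rw [hk]
  push_cast
  rw [mul_right_comm, Rat.den_mul_eq_num, mul_comm]

lemma exists_integralPolyhedron_eq {n : ℕ} {Q : Set (Fin n → ℝ)} (hQ : IsRationalPolyhedron Q) :
    ∃ I, Q = integralPolyhedron ∅ I := by
  classical
  obtain ⟨m, A, b, rfl⟩ := hQ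
  choose N hN v hv using fun i => exists_pos_nat_mul_eq_intCast (Fin.snoc (A i) (b i) : _ → ℚ)
  refine ⟨Finset.univ.image fun i => (-Fin.init (v i), -v i (Fin.last n)), Set.ext fun x => ?_⟩
  have hleft (i : Fin m) : intVec (Fin.init (v i)) ⬝ᵥ x = N i * ∑ j, (A i j : ℝ) * x j := by
    rw [dotProduct, Finset.mul_sum]
    refine Finset.sum_congr rfl fun j _ => ?_
    have := hv i j.castSucc
    rw [Fin.snoc_castSucc] at this
    rw [← mul_assoc, intVec_apply, Fin.init]
    exact congrArg (· * x j) (by exact_mod_cast this.symm)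
  have hright (i : Fin m) : (v i (Fin.last n) : ℝ) = N i * b i := by
    have := hv i (Fin.last n)
    rw [Fin.snoc_last] at this
    exact_mod_cast this.symm
  simp only [integralPolyhedron, mem_ofPred_eq, Finset.notMem_empty, Finset.forall_mem_image,
    Finset.mem_univ, forall_true_left, map_neg, neg_dotProduct, Int.cast_neg, neg_le_neg_iff,
    hleft, hright, false_imp_iff, implies_true, true_and]
  exact forall_congr' fun i => (mul_le_mul_iff_right₀ (Nat.cast_pos.2 (hN i))).symm

end RationalPolyhedra

end SplitRank

/-- Every rational polyhedron has finite split rank: some iterated split closure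
equals the integer hull. -/
theorem every_rational_polyhedron_has_finite_split_rank
    {n : ℕ} (Q : Set (Fin n → ℝ)) (hQ : IsRationalPolyhedron Q) :
    ∃ t : ℕ, splitClosure^[t] Q = integerHull Q := by
  open SplitRank in
  obtain ⟨I, rfl⟩ := exists_integralPolyhedron_eq hQ
  obtain ⟨I', hI'⟩ := exists_integerHull_integralPolyhedron_eq_integralPolyhedron ∅ I
  have hconvex := convex_integralPolyhedron ∅ I
  have valid : ∀ c ∈ I', ∀ z, intVec z ∈ integralPolyhedron ∅ I → c.2 ≤ c.1 ⬝ᵥ z := by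
    intro c hc z hz
    have hz' : intVec z ∈ integralPolyhedron ∅ I' :=
      hI' ▸ intVec_mem_integerHull hz
    exact (intVec_mem_integralPolyhedron.1 hz').2 c hc
  have attained : ∀ c ∈ I', ∃ t, splitClosure^[t] (integralPolyhedron ∅ I) ⊆
      {x | (c.2 : ℝ) ≤ intVec c.1 ⬝ᵥ x} := fun c hc =>
    exists_iterate_splitClosure_integralPolyhedron_subset_setOf_le (valid c hc)
  choose! t ht using attained
  refine ⟨I'.sup t, Subset.antisymm ?_ (integerHull_subset_iterate_splitClosure hconvex _)⟩
  rw [hI']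
  exact fun x hx => ⟨by simp, fun c hc =>
    ht c hc (antitone_iterate_splitClosure hconvex (Finset.le_sup hc) hx)⟩
end

section
/- For every convex set Q ⊆ ℝⁿ, the split closure of Q satisfies SC(Q) = ⋂_{c ∈ ℤⁿ} ⋂_{δ ∈ ℤ} conv( (Q ∩ {x ∈ ℝⁿ : c·x ≤ δ}) ∪ (Q ∩ {x ∈ ℝⁿ : c·x ≥ δ + 1}) ). -/
open Set

/-! Fix an affine function `f`, such as `x ↦ c·x`. An integer never lies strictly between `δ` and
`δ + 1`, which gives one inclusion. Conversely, let `x` belong to all the split hulls and take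
`δ = ⌊f x⌋`. Either `x` is in one of the two sides, hence at level `δ` or `δ + 1`, or `x` lies on a
segment in `Q` from a point with `f ≤ δ` to a point with `f ≥ δ + 1`. That segment crosses the
levels `δ` and `δ + 1` on either side of `x`, so `x` is a convex combination of points of `Q` at
which `f` is an integer. -/

section LinearOrderedField

variable {𝕜 E : Type*} [Field 𝕜] [LinearOrder 𝕜] [IsStrictOrderedRing 𝕜]
  [AddCommGroup E] [Module 𝕜 E]

theorem convexHull_union_eq_union_convexJoin {s t : Set E} (hs : Convex 𝕜 s) (ht : Convex 𝕜 t) :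
    convexHull 𝕜 (s ∪ t) = s ∪ t ∪ convexJoin 𝕜 s t := by
  rcases s.eq_empty_or_nonempty with rfl | hs₀
  · simp [ht.convexHull_eq]
  rcases t.eq_empty_or_nonempty with rfl | ht₀
  · simp [hs.convexHull_eq]
  rw [hs.convexHull_union ht hs₀ ht₀, eq_comm, union_eq_right]
  exact union_subset (subset_convexJoin_left ht₀) (subset_convexJoin_right hs₀)

theorem exists_mem_segment_apply_eq (f : E →ᵃ[𝕜] 𝕜) {y z : E} {a : 𝕜} (hy : f y ≤ a)
    (hz : a ≤ f z) : ∃ p ∈ segment 𝕜 y z, f p = a := by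
  have ha : a ∈ f '' segment 𝕜 y z := by
    rw [image_segment, segment_eq_Icc (hy.trans hz)]
    exact ⟨hy, hz⟩
  exact ha

theorem mem_convexHull_inter_preimage_pair {Q : Set E} (hQ : Convex 𝕜 Q) (f : E →ᵃ[𝕜] 𝕜)
    {a b : 𝕜} {x : E} (hax : a ≤ f x) (hxb : f x ≤ b)
    (hx : x ∈ convexHull 𝕜 (Q ∩ {y | f y ≤ a} ∪ Q ∩ {y | b ≤ f y})) :
    x ∈ convexHull 𝕜 (Q ∩ f ⁻¹' {a, b}) := by
  have hle : Convex 𝕜 (Q ∩ {y | f y ≤ a}) := hQ.inter ((convex_Iic a).affine_preimage f)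
  have hge : Convex 𝕜 (Q ∩ {y | b ≤ f y}) := hQ.inter ((convex_Ici b).affine_preimage f)
  rw [convexHull_union_eq_union_convexJoin hle hge] at hx
  rcases hx with (⟨hxQ, hxa⟩ | ⟨hxQ, hbx⟩) | hx
  · exact subset_convexHull 𝕜 _ ⟨hxQ, .inl (le_antisymm hxa hax)⟩
  · exact subset_convexHull 𝕜 _ ⟨hxQ, .inr (le_antisymm hxb hbx)⟩
  obtain ⟨y, ⟨hyQ, hya⟩, z, ⟨hzQ, hbz⟩, hxyz⟩ := mem_convexJoin.1 hx
  have hxQ : x ∈ Q := hQ.segment_subset hyQ hzQ hxyz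
  obtain ⟨p, hp, hpa⟩ := exists_mem_segment_apply_eq f hya hax
  obtain ⟨q, hq, hqb⟩ := exists_mem_segment_apply_eq f hxb hbz
  have hpQ : p ∈ Q := hQ.segment_subset hyQ hxQ hp
  have hqQ : q ∈ Q := hQ.segment_subset hxQ hzQ hq
  have hpxq : x ∈ segment 𝕜 p q := by
    rw [mem_segment_iff_wbtw] at hxyz hp hq ⊢
    exact (hxyz.trans_left_right hp).trans_right_left hq
  have hpS : p ∈ Q ∩ f ⁻¹' {a, b} := ⟨hpQ, .inl hpa⟩
  have hqS : q ∈ Q ∩ f ⁻¹' {a, b} := ⟨hqQ, .inr hqb⟩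
  exact segment_subset_convexHull hpS hqS hpxq

theorem splitClosure_eq_iInter_splits_general [Archimedean 𝕜] {Q : Set E} (hQ : Convex 𝕜 Q)
    (f : E →ᵃ[𝕜] 𝕜) :
    convexHull 𝕜 {x ∈ Q | ∃ z : ℤ, f x = z} =
      ⋂ δ : ℤ, convexHull 𝕜 (Q ∩ {x | f x ≤ δ} ∪ Q ∩ {x | (δ : 𝕜) + 1 ≤ f x}) := by
  refine Subset.antisymm (subset_iInter fun δ => convexHull_mono ?_) fun x hx => ?_
  · rintro x ⟨hxQ, z, hz⟩
    rcases le_or_gt z δ with hzδ | hδz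
    · exact .inl ⟨hxQ, hz.trans_le (mod_cast hzδ)⟩
    · exact .inr ⟨hxQ, (mod_cast hδz : (δ : 𝕜) + 1 ≤ z).trans_eq hz.symm⟩
  · let _ : FloorRing 𝕜 := Archimedean.floorRing 𝕜
    have hconv : x ∈ convexHull 𝕜 (Q ∩ f ⁻¹' {(⌊f x⌋ : 𝕜), (⌊f x⌋ : 𝕜) + 1}) :=
      mem_convexHull_inter_preimage_pair hQ f (Int.floor_le _) (Int.lt_floor_add_one _).le
        (mem_iInter.1 hx ⌊f x⌋)
    refine convexHull_mono ?_ hconv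
    rintro p ⟨hpQ, hp | hp⟩
    · exact ⟨hpQ, ⌊f x⌋, hp⟩
    · exact ⟨hpQ, ⌊f x⌋ + 1, hp.trans (by push_cast; rfl)⟩

end LinearOrderedField

/-- For a convex set `Q`, the split closure coincides with the intersection of all
split disjunctions `conv((Q ∩ {c·x ≤ δ}) ∪ (Q ∩ {c·x ≥ δ + 1}))`. -/
theorem splitClosure_eq_iInter_splits
    {n : ℕ} (Q : Set (Fin n → ℝ)) (hQ : Convex ℝ Q) :
    splitClosure Q =
      ⋂ (c : Fin n → ℤ) (δ : ℤ),
        convexHull ℝ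
          ((Q ∩ {x | ∑ i, (c i : ℝ) * x i ≤ (δ : ℝ)}) ∪
           (Q ∩ {x | (δ : ℝ) + 1 ≤ ∑ i, (c i : ℝ) * x i})) :=
  iInter_congr fun c => splitClosure_eq_iInter_splits_general hQ
    (dotProductBilin ℝ ℝ fun i => (c i : ℝ)).toAffineMap
end

section
/- Let Q ⊆ ℝⁿ be a convex set, c ∈ ℝⁿ and x̄ ∈ ℝⁿ. Then x̄ ∈ conv({x ∈ Q : c·x ∈ ℤ}) if and only if x̄ ∈ conv({x ∈ Q : c·x = ⌊c·x̄⌋ or c·x = ⌈c·x̄⌉}). -/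
open Set

/-!
An integer is at most `⌊f x⌋` or at least `⌈f x⌉`. So a point `x` in the hull of the integral
slices of `Q` lies on a segment `[a, b] ⊆ Q` with `f a ≤ ⌊f x⌋` and `⌈f x⌉ ≤ f b`, except in the
degenerate case where all slices are on one side and `f x` is itself an integer. By the
intermediate value property on `[a, x]` and `[x, b]`, this segment crosses the two slices adjacent
to `x`, once on each side of `x`.
-/

theorem le_floor_or_ceil_le {R : Type*} [Ring R] [LinearOrder R] [FloorRing R] (r : R) (z : ℤ) :
    z ≤ ⌊r⌋ ∨ ⌈r⌉ ≤ z := by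
  have := Int.ceil_le_floor_add_one r
  lia

section AffineFunctional

variable {𝕜 E : Type*} [Field 𝕜] [LinearOrder 𝕜] [IsStrictOrderedRing 𝕜]
  [AddCommGroup E] [Module 𝕜 E]

theorem exists_mem_segment_affineMap_eq (f : E →ᵃ[𝕜] 𝕜) {a b : E} {r : 𝕜}
    (hr : r ∈ Icc (f a) (f b)) : ∃ p ∈ segment 𝕜 a b, f p = r := by
  have hmem : r ∈ f '' segment 𝕜 a b := by
    rw [image_segment]
    exact Icc_subset_segment hr
  exact hmem

variable {Q : Set E} {α β : 𝕜} {x : E}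

theorem mem_convexHull_levels_of_mem_segment (hQ : Convex 𝕜 Q) (f : E →ᵃ[𝕜] 𝕜) {a b : E}
    (ha : a ∈ Q) (hb : b ∈ Q) (hx : x ∈ segment 𝕜 a b) (haα : f a ≤ α) (hαx : α ≤ f x)
    (hxβ : f x ≤ β) (hβb : β ≤ f b) :
    x ∈ convexHull 𝕜 {y ∈ Q | f y = α ∨ f y = β} := by
  have hxQ : x ∈ Q := hQ.segment_subset ha hb hx
  obtain ⟨p, hp, hfp⟩ := exists_mem_segment_affineMap_eq f ⟨haα, hαx⟩
  obtain ⟨q, hq, hfq⟩ := exists_mem_segment_affineMap_eq f ⟨hxβ, hβb⟩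
  have hpQ : p ∈ Q := hQ.segment_subset ha hxQ hp
  have hqQ : q ∈ Q := hQ.segment_subset hxQ hb hq
  rw [mem_segment_iff_wbtw] at hx hp hq
  have hpxq : Wbtw 𝕜 p x q := (hx.trans_left_right hp).trans_right_left hq
  exact (convex_convexHull 𝕜 _).mem_of_wbtw hpxq
    (subset_convexHull 𝕜 _ ⟨hpQ, .inl hfp⟩) (subset_convexHull 𝕜 _ ⟨hqQ, .inr hfq⟩)

theorem mem_convexHull_levels_of_mem_convexHull_sublevel_union_superlevel
    (hQ : Convex 𝕜 Q) (f : E →ᵃ[𝕜] 𝕜) (hαx : α ≤ f x) (hxβ : f x ≤ β)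
    (hx : x ∈ convexHull 𝕜 ({y ∈ Q | f y ≤ α} ∪ {y ∈ Q | β ≤ f y})) :
    x ∈ convexHull 𝕜 {y ∈ Q | f y = α ∨ f y = β} := by
  have hsub : Convex 𝕜 {y ∈ Q | f y ≤ α} := hQ.inter ((convex_Iic α).affine_preimage f)
  have hsup : Convex 𝕜 {y ∈ Q | β ≤ f y} := hQ.inter ((convex_Ici β).affine_preimage f)
  rcases eq_empty_or_nonempty {y ∈ Q | f y ≤ α} with hsub_empty | hsub_nonempty
  · rw [hsub_empty, empty_union, hsup.convexHull_eq] at hx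
    exact subset_convexHull 𝕜 _ ⟨hx.1, .inr (hxβ.antisymm hx.2)⟩
  rcases eq_empty_or_nonempty {y ∈ Q | β ≤ f y} with hsup_empty | hsup_nonempty
  · rw [hsup_empty, union_empty, hsub.convexHull_eq] at hx
    exact subset_convexHull 𝕜 _ ⟨hx.1, .inl (hx.2.antisymm hαx)⟩
  rw [hsub.convexHull_union hsup hsub_nonempty hsup_nonempty, mem_convexJoin] at hx
  obtain ⟨a, ⟨haQ, haα⟩, b, ⟨hbQ, hβb⟩, hxab⟩ := hx
  exact mem_convexHull_levels_of_mem_segment hQ f haQ hbQ hxab haα hαx hxβ hβb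

theorem mem_convexHull_int_slices_iff_mem_convexHull_floor_ceil_general [FloorRing 𝕜]
    (hQ : Convex 𝕜 Q) (f : E →ᵃ[𝕜] 𝕜) (x : E) :
    x ∈ convexHull 𝕜 {y ∈ Q | ∃ z : ℤ, f y = z} ↔
      x ∈ convexHull 𝕜 {y ∈ Q | f y = ⌊f x⌋ ∨ f y = ⌈f x⌉} := by
  constructor <;> intro hx
  · have hsplit : {y ∈ Q | ∃ z : ℤ, f y = z} ⊆
        {y ∈ Q | f y ≤ ⌊f x⌋} ∪ {y ∈ Q | (⌈f x⌉ : 𝕜) ≤ f y} := by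
      rintro y ⟨hyQ, z, hz⟩
      rcases le_floor_or_ceil_le (f x) z with hzfloor | hzceil
      · exact .inl ⟨hyQ, hz.trans_le (Int.cast_le.2 hzfloor)⟩
      · exact .inr ⟨hyQ, (Int.cast_le.2 hzceil).trans_eq hz.symm⟩
    exact mem_convexHull_levels_of_mem_convexHull_sublevel_union_superlevel hQ f
      (Int.floor_le _) (Int.le_ceil _) (convexHull_mono hsplit hx)
  · refine convexHull_mono ?_ hx
    rintro y ⟨hyQ, hy | hy⟩ <;> exact ⟨hyQ, _, hy⟩

end AffineFunctional

/-- For a convex set `Q ⊆ ℝⁿ`, `c ∈ ℝⁿ` and `x̄ ∈ ℝⁿ`, the point `x̄` lies in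
`conv({x ∈ Q : c·x ∈ ℤ})` iff it lies in
`conv({x ∈ Q : c·x = ⌊c·x̄⌋ or c·x = ⌈c·x̄⌉})`. -/
theorem mem_convexHull_int_slices_iff_mem_convexHull_floor_ceil
    {n : ℕ} (Q : Set (Fin n → ℝ)) (hQ : Convex ℝ Q) (c xbar : Fin n → ℝ) :
    xbar ∈ convexHull ℝ {x ∈ Q | ∃ z : ℤ, ∑ i, c i * x i = (z : ℝ)} ↔
    xbar ∈ convexHull ℝ
      {x ∈ Q | ∑ i, c i * x i = (⌊∑ i, c i * xbar i⌋ : ℝ) ∨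
               ∑ i, c i * x i = (⌈∑ i, c i * xbar i⌉ : ℝ)} :=
  mem_convexHull_int_slices_iff_mem_convexHull_floor_ceil_general hQ
    (dotProductBilin ℝ ℝ c).toAffineMap xbar
end

section
/- If Q ⊆ ℝⁿ is a rational polyhedron with conv(Q ∩ ℤⁿ) ⊊ Q, then SC(Q) ⊊ Q, i.e. the split closure of Q is strictly contained in Q. -/
open Set

/-!
Suppose `splitClosure Q = Q` and write `Q = {x | A x ≤ b}` with integral `A` and `b`. Every `x ∈ Q`
lies in the integer hull, by induction from larger to smaller sets of constraints active at `x`.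

If some integral `d` is orthogonal to the rows of `A` active at `x` but not to all rows, then on
each of the two rays from `x` in the directions `± d` either a further constraint becomes active, or
the direction is an integral recession direction of `Q`, hence also one of the integer hull; at
least one of the rays is of the first kind, so `x` is in the integer hull.

Otherwise the active constraints define a minimal face. If it had no integral point, Kronecker's
theorem would give an integral `c` such that `c ⬝ᵥ p` has the same non-integral value for all `p` on
the face; but `x` is in the convex hull of the points of `Q` at which `c` is integral, and one of
these must lie on the face. So the face contains an integral `z`. As `ℝ` is flat over `ℤ`, `x - z`
is a real combination of integral vectors in the kernel of the active rows. By minimality these lie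
in the kernel of `A`, so translation by `x - z` preserves the integer hull.
-/

open Matrix

section IntegerLinearAlgebra

variable {m n : Type*} [Fintype n]

theorem mem_span_image_ker_of_map_mulVec_eq_zero {R S : Type*} [CommRing R] [CommRing S]
    [Algebra R S] [Module.Flat R S] [Finite m] (A : Matrix m n R) {v : n → S}
    (hv : A.map (algebraMap R S) *ᵥ v = 0) :
    v ∈ Submodule.span S ((algebraMap R S ∘ ·) '' {z : n → R | A *ᵥ z = 0}) := by
  classical
  cases nonempty_fintype m
  -- The equational criterion for flatness: as `x` kills the rows of `A`, it factors through a map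
  -- `a` to a finite free module which kills them too.
  let x : (n → R) →ₗ[R] S := Fintype.linearCombination R v
  have x_comp_eq_zero : x ∘ₗ A.vecMulLinear = 0 := by
    refine LinearMap.pi_ext' fun i => LinearMap.ext_ring ?_
    simpa [x, Fintype.linearCombination_apply, Algebra.smul_def, mulVec, dotProduct]
      using congrFun hv i
  obtain ⟨k, a, y, x_eq, a_comp_eq_zero⟩ :=
    Module.Flat.exists_factorization_of_comp_eq_zero_of_free x_comp_eq_zero
  let z (l : Fin k) : n → R := fun j => a (Pi.single j 1) l
  have a_apply (w : n → R) (l : Fin k) : a w l = w ⬝ᵥ z l := by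
    conv_lhs => rw [pi_eq_sum_univ' w]
    simp [z, dotProduct]
  have mulVec_z (l : Fin k) : A *ᵥ z l = 0 := by
    ext i
    have := DFunLike.congr_fun (LinearMap.congr_fun a_comp_eq_zero (Pi.single i 1)) l
    simpa [a_apply] using! this
  have v_eq : v = ∑ l, y (Finsupp.single l 1) • (algebraMap R S ∘ z l) := by
    ext j
    have : v j = y (a (Pi.single j 1)) := by
      simpa [x] using LinearMap.congr_fun x_eq (Pi.single j 1)
    rw [this, ← Finsupp.univ_sum_single (a (Pi.single j 1)), map_sum, Finset.sum_apply]
    refine Finset.sum_congr rfl fun l _ => ?_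
    rw [← mul_one (a (Pi.single j 1) l), ← smul_eq_mul, ← Finsupp.smul_single, map_smul,
      Algebra.smul_def, mul_comm]
    rfl
  rw [v_eq]
  exact Submodule.sum_mem _ fun l _ =>
    Submodule.smul_mem _ _ (Submodule.subset_span ⟨z l, mulVec_z l, rfl⟩)

theorem exists_linearMap_rat_notMem_range {M : Type*} [AddCommGroup M] [Module.Projective ℤ M]
    {Λ : Submodule ℤ M} {b : M} (hb : b ∉ Λ) :
    ∃ F : M →ₗ[ℤ] ℚ, (∀ w ∈ Λ, F w ∈ range ((↑) : ℤ → ℚ)) ∧ F b ∉ range ((↑) : ℤ → ℚ) := by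
  -- `M` is projective, so a character `M ⧸ Λ → ℚ / ℤ` that is nonzero at `b` lifts to `M → ℚ`.
  obtain ⟨χ, hχ⟩ := CharacterModule.exists_character_apply_ne_zero_of_ne_zero
    (mt (Submodule.Quotient.mk_eq_zero Λ).1 hb)
  let π : ℚ →ₗ[ℤ] AddCircle (1 : ℚ) := (QuotientAddGroup.mk' _).toIntLinearMap
  have π_eq_zero_iff (q : ℚ) : π q = 0 ↔ q ∈ range ((↑) : ℤ → ℚ) := by
    change (q : AddCircle (1 : ℚ)) = 0 ↔ _
    rw [AddCircle.coe_eq_zero_iff]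
    simp only [zsmul_one, mem_range]
  obtain ⟨F, hF⟩ := Module.projective_lifting_property π
    (AddMonoidHom.toIntLinearMap χ ∘ₗ Λ.mkQ) (QuotientAddGroup.mk'_surjective _)
  have π_F (w : M) : π (F w) = χ (Submodule.Quotient.mk w) := LinearMap.congr_fun hF w
  refine ⟨F, fun w hw => ?_, fun hFb => hχ ?_⟩
  · rw [← π_eq_zero_iff, π_F, (Submodule.Quotient.mk_eq_zero Λ).2 hw, map_zero]
  · rw [← π_F, (π_eq_zero_iff _).2 hFb]

theorem exists_vecMul_int_of_forall_mulVec_ne [Fintype m] (A : Matrix m n ℤ) (b : m → ℤ)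
    (h : ∀ z, A *ᵥ z ≠ b) :
    ∃ (y : m → ℚ) (c : n → ℤ),
      y ᵥ* A.map (↑) = (↑) ∘ c ∧ y ⬝ᵥ ((↑) ∘ b) ∉ range ((↑) : ℤ → ℚ) := by
  classical
  have hb : b ∉ LinearMap.range A.mulVecLin := fun ⟨z, hz⟩ => h z hz
  obtain ⟨F, F_int, F_b⟩ := exists_linearMap_rat_notMem_range hb
  have F_apply (w : m → ℤ) : F w = (fun i => F (Pi.single i 1)) ⬝ᵥ ((↑) ∘ w) := by
    conv_lhs => rw [pi_eq_sum_univ' w, map_sum]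
    simp_rw [map_smul]
    simp [dotProduct, mul_comm]
  choose c hc using fun j => F_int (A.col j) ⟨Pi.single j 1, by simp⟩
  refine ⟨fun i => F (Pi.single i 1), c, funext fun j => ?_, by rwa [← F_apply]⟩
  exact (F_apply (A.col j)).symm.trans (hc j).symm

theorem exists_int_forall_dotProduct_notMem_range (K : Type*) [Field K] [CharZero K]
    [Finite m] (A : Matrix m n ℤ) (b : m → ℤ) (h : ∀ z, A *ᵥ z ≠ b) :
    ∃ c : n → ℤ, ∀ p : n → K, A.map (↑) *ᵥ p = (↑) ∘ b →
      ((↑) ∘ c) ⬝ᵥ p ∉ range ((↑) : ℤ → K) := by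
  cases nonempty_fintype m
  obtain ⟨y, c, hc, hb⟩ := exists_vecMul_int_of_forall_mulVec_ne A b h
  refine ⟨c, fun p hp ⟨k, hk⟩ => hb ⟨k, ?_⟩⟩
  have c_eq : ((↑) ∘ c : n → K) = ((↑) ∘ y) ᵥ* A.map (↑) := by
    ext j
    have := congrArg ((↑) : ℚ → K) (congrFun hc j)
    simpa [vecMul, dotProduct] using this.symm
  have : (k : K) = ((y ⬝ᵥ ((↑) ∘ b) : ℚ) : K) := by
    rw [hk, c_eq, ← dotProduct_mulVec, hp]
    simp [dotProduct]
  exact_mod_cast this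

theorem map_intCast_mulVec {R : Type*} [Ring R] (A : Matrix m n ℤ) (z : n → ℤ) :
    A.map ((↑) : ℤ → R) *ᵥ ((↑) ∘ z) = (↑) ∘ (A *ᵥ z) := by
  ext i
  simp [mulVec, dotProduct]

theorem intCast_comp_neg {ι R : Type*} [Ring R] (z : ι → ℤ) :
    ((↑) ∘ (-z) : ι → R) = -((↑) ∘ z) := by
  ext
  simp

theorem exists_pos_forall_mul_eq_intCast {ι : Type*} [Finite ι] (r : ι → ℚ) :
    ∃ N : ℕ, 0 < N ∧ ∃ z : ι → ℤ, ∀ i, N * r i = z i := by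
  obtain ⟨N, hN⟩ := IsLocalization.exist_integer_multiples_of_finite (nonZeroDivisors ℤ) r
  choose z hz using hN
  refine ⟨(N : ℤ).natAbs, Int.natAbs_pos.2 (nonZeroDivisors.ne_zero N.2),
    fun i => (N : ℤ).sign * z i, fun i => ?_⟩
  have : (z i : ℚ) = N * r i := by simpa using hz i
  push_cast
  rw [this, Nat.cast_natAbs, ← mul_assoc, ← Int.cast_mul, Int.sign_mul_self_eq_abs]

end IntegerLinearAlgebra

section ConvexSets

/-- The lineality space of a set `C`: the vectors along which `C` is invariant under translation
by arbitrary multiples. No convexity of `C` is assumed. -/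
def linealitySpace (R : Type*) {E : Type*} [Semiring R] [AddCommMonoid E] [Module R E]
    (C : Set E) : Submodule R E where
  carrier := {v | ∀ t : R, ∀ p ∈ C, p + t • v ∈ C}
  add_mem' hv hw t p hp := by
    rw [smul_add, ← add_assoc]
    exact hw t _ (hv t p hp)
  zero_mem' := by simp
  smul_mem' a v hv t p hp := by
    rw [smul_smul]
    exact hv (t * a) p hp

variable {𝕜 E : Type*} [Field 𝕜] [LinearOrder 𝕜] [IsStrictOrderedRing 𝕜] [AddCommGroup E]
  [Module 𝕜 E] {C : Set E}

theorem mem_of_add_smul_mem_of_sub_smul_mem (hC : Convex 𝕜 C) {x d : E} {s t : 𝕜} (hs : 0 < s)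
    (ht : 0 < t) (h_add : x + t • d ∈ C) (h_sub : x - s • d ∈ C) : x ∈ C := by
  have h := convex_iff_div.1 hC h_add h_sub hs.le ht.le (by positivity)
  have hst : s + t ≠ 0 := by positivity
  convert h using 1
  match_scalars <;> field_simp
  ring

theorem add_smul_mem_of_forall_add_mem [Archimedean 𝕜] (hC : Convex 𝕜 C) {d : E}
    (hd : ∀ p ∈ C, p + d ∈ C) {y : E} (hy : y ∈ C) {t : 𝕜} (ht : 0 ≤ t) : y + t • d ∈ C := by
  have add_nsmul_mem (N : ℕ) : y + N • d ∈ C := by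
    induction N with
    | zero => simpa using hy
    | succ N ih => simpa [succ_nsmul, add_assoc] using hd _ ih
  obtain ⟨N, hN⟩ := exists_nat_gt t
  have N_pos : (0 : 𝕜) < N := ht.trans_lt hN
  have := hC.add_smul_mem hy (add_nsmul_mem N) (t := t / N)
    ⟨by positivity, (div_le_one N_pos).2 hN.le⟩
  rwa [← Nat.cast_smul_eq_nsmul 𝕜, smul_smul, div_mul_cancel₀ _ N_pos.ne'] at this

end ConvexSets

section Polyhedron

/-- The polyhedron `{x | A x ≤ b}`. -/
def polyhedron {ι κ R : Type*} [Fintype κ] [NonUnitalNonAssocSemiring R] [LE R]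
    (A : Matrix ι κ R) (b : ι → R) : Set (κ → R) :=
  {x | A *ᵥ x ≤ b}

/-- The indices of the inequalities of the system `A x ≤ b` that are equalities at `x`; they
determine the smallest face of the polyhedron containing `x`. -/
def activeSet {ι κ R : Type*} [Fintype κ] [NonUnitalNonAssocSemiring R]
    (A : Matrix ι κ R) (b : ι → R) (x : κ → R) : Set ι :=
  {i | (A *ᵥ x) i = b i}

variable {ι κ 𝕜 : Type*} [Fintype κ] [Field 𝕜] [LinearOrder 𝕜] [IsStrictOrderedRing 𝕜]
  {A : Matrix ι κ 𝕜} {b : ι → 𝕜} {x d : κ → 𝕜}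

theorem convex_polyhedron (A : Matrix ι κ 𝕜) (b : ι → 𝕜) : Convex 𝕜 (polyhedron A b) :=
  (convex_Iic b).linear_preimage A.mulVecLin

theorem add_mem_polyhedron (hx : x ∈ polyhedron A b) (hd : A *ᵥ d ≤ 0) :
    x + d ∈ polyhedron A b := by
  simpa [polyhedron, mulVec_add] using add_le_add hx hd

theorem ker_mulVecLin_le_linealitySpace (A : Matrix ι κ 𝕜) (b : ι → 𝕜) :
    LinearMap.ker A.mulVecLin ≤ linealitySpace 𝕜 (polyhedron A b) := fun v hv t p hp =>
  add_mem_polyhedron hp (by rw [mulVec_smul, show A *ᵥ v = 0 from hv, smul_zero])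

theorem exists_activeSet_ssubset_activeSet_add_smul [Finite ι] (hx : x ∈ polyhedron A b)
    (hd : ∀ i ∈ activeSet A b x, (A *ᵥ d) i = 0) (hpos : ¬ A *ᵥ d ≤ 0) :
    ∃ t : 𝕜, 0 < t ∧ x + t • d ∈ polyhedron A b ∧
      activeSet A b x ⊂ activeSet A b (x + t • d) := by
  have apply_add (t : 𝕜) (i : ι) : (A *ᵥ (x + t • d)) i = (A *ᵥ x) i + t * (A *ᵥ d) i := by
    simp [mulVec_add, mulVec_smul]
  obtain ⟨i₀, hi₀⟩ : ∃ i, 0 < (A *ᵥ d) i := by simpa [Pi.le_def] using hpos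
  obtain ⟨i, hi, t_le⟩ := exists_min_image {i | 0 < (A *ᵥ d) i}
    (fun i => (b i - (A *ᵥ x) i) / (A *ᵥ d) i) (toFinite _) ⟨i₀, hi₀⟩
  set t := (b i - (A *ᵥ x) i) / (A *ᵥ d) i
  have i_notMem : i ∉ activeSet A b x := fun h => hi.ne' (hd i h)
  have t_pos : 0 < t := div_pos (sub_pos.2 ((hx i).lt_of_ne i_notMem)) hi
  refine ⟨t, t_pos, fun k => ?_, ssubset_iff_exists.2 ⟨fun k hk => ?_, i, ?_, i_notMem⟩⟩
  · rw [apply_add]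
    obtain hk | hk := lt_or_ge 0 ((A *ᵥ d) k)
    · linarith [(le_div_iff₀ hk).1 (t_le k hk)]
    · linarith [hx k, mul_nonpos_of_nonneg_of_nonpos t_pos.le hk]
  · rw [activeSet, mem_ofPred_eq, apply_add, hd k hk, mul_zero, add_zero, hk]
  · rw [activeSet, mem_ofPred_eq, apply_add, div_mul_cancel₀ _ hi.ne', add_sub_cancel]

theorem exists_activeSet_subset_of_mem_convexHull [Finite ι] {S : Set (κ → 𝕜)}
    (hS : S ⊆ polyhedron A b) (hx : x ∈ convexHull 𝕜 S) :
    ∃ p ∈ S, activeSet A b x ⊆ activeSet A b p := by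
  -- On the polyhedron, the sum `g` of the constraints active at `x` is maximal exactly at the
  -- points where all of them are active, and some `p ∈ S` has `g x ≤ g p`.
  classical
  cases nonempty_fintype ι
  let T := (activeSet A b x).toFinset
  let g : (κ → 𝕜) →ₗ[𝕜] 𝕜 := ∑ i ∈ T, LinearMap.proj i ∘ₗ A.mulVecLin
  have g_apply (p : κ → 𝕜) : g p = ∑ i ∈ T, (A *ᵥ p) i := by simp [g]
  obtain ⟨p, hpS, hp⟩ := (g.convexOn (convex_convexHull 𝕜 S)).exists_ge_of_mem_convexHull
    (subset_convexHull 𝕜 S) hx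
  have g_x : g x = ∑ i ∈ T, b i := by
    rw [g_apply]
    exact Finset.sum_congr rfl fun i hi => (mem_toFinset.1 hi : i ∈ activeSet A b x)
  have le_b : ∀ i ∈ T, (A *ᵥ p) i ≤ b i := fun i _ => hS hpS i
  have sum_eq : ∑ i ∈ T, (A *ᵥ p) i = ∑ i ∈ T, b i :=
    (Finset.sum_le_sum le_b).antisymm (by rwa [← g_x, ← g_apply])
  exact ⟨p, hpS, fun i hi => (Finset.sum_eq_sum_iff_of_le le_b).1 sum_eq i (mem_toFinset.2 hi)⟩

end Polyhedron

/-- The polyhedron in real space cut out by an integral system `A x ≤ b`. -/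
abbrev intPolyhedron {ι κ : Type*} [Fintype κ] (A : Matrix ι κ ℤ) (b : ι → ℤ) : Set (κ → ℝ) :=
  polyhedron (A.map (↑)) ((↑) ∘ b)

/-- The indices of the inequalities of the integral system `A x ≤ b` that are equalities at the
real point `x`. -/
abbrev intActiveSet {ι κ : Type*} [Fintype κ] (A : Matrix ι κ ℤ) (b : ι → ℤ) (x : κ → ℝ) : Set ι :=
  activeSet (A.map (↑)) ((↑) ∘ b) x

theorem IsRationalPolyhedron.exists_eq_intPolyhedron {n : ℕ} {Q : Set (Fin n → ℝ)}
    (hQ : IsRationalPolyhedron Q) :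
    ∃ (m : ℕ) (A : Matrix (Fin m) (Fin n) ℤ) (b : Fin m → ℤ), Q = intPolyhedron A b := by
  obtain ⟨m, A, b, rfl⟩ := hQ
  choose N N_pos z hz using fun i => exists_pos_forall_mul_eq_intCast
    (Sum.elim (A i) fun _ : Unit => b i)
  have hA (i j) : (z i (.inl j) : ℝ) = N i * A i j := by exact_mod_cast (hz i (.inl j)).symm
  have hb (i) : (z i (.inr ()) : ℝ) = N i * b i := by exact_mod_cast (hz i (.inr ())).symm
  refine ⟨m, fun i j => z i (.inl j), fun i => z i (.inr ()),
    ext fun x => forall_congr' fun i => ?_⟩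
  have N_pos' : (0 : ℝ) < N i := mod_cast N_pos i
  change _ ↔ ∑ j, (z i (.inl j) : ℝ) * x j ≤ (z i (.inr ()) : ℝ)
  simp only [hA, hb, mul_assoc, ← Finset.mul_sum]
  exact (mul_le_mul_iff_right₀ N_pos').symm

section Hulls

variable {n : ℕ} {Q : Set (Fin n → ℝ)}

theorem splitClosure_subset (hQ : Convex ℝ Q) : splitClosure Q ⊆ Q :=
  (iInter_subset _ 0).trans (convexHull_min (sep_subset _ _) hQ)

theorem convex_integerHull (Q : Set (Fin n → ℝ)) : Convex ℝ (integerHull Q) :=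
  convex_convexHull ℝ _

theorem intCast_mem_integerHull {z : Fin n → ℤ} (hz : (↑) ∘ z ∈ Q) : (↑) ∘ z ∈ integerHull Q :=
  subset_convexHull ℝ _ ⟨hz, fun i => ⟨z i, rfl⟩⟩

theorem add_intCast_mem_integerHull {d : Fin n → ℤ} (hd : ∀ p ∈ Q, p + (↑) ∘ d ∈ Q)
    {y : Fin n → ℝ} (hy : y ∈ integerHull Q) : y + (↑) ∘ d ∈ integerHull Q := by
  refine convexHull_min (fun p hp => ?_) ((convex_integerHull Q).translate_preimage_left _) hy
  choose z hz using hp.2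
  exact subset_convexHull ℝ _ ⟨hd p hp.1, fun i => ⟨z i + d i, by simp [hz]⟩⟩

theorem add_smul_intCast_mem_integerHull {d : Fin n → ℤ} (hd : ∀ p ∈ Q, p + (↑) ∘ d ∈ Q)
    {y : Fin n → ℝ} (hy : y ∈ integerHull Q) {t : ℝ} (ht : 0 ≤ t) :
    y + t • ((↑) ∘ d) ∈ integerHull Q :=
  add_smul_mem_of_forall_add_mem (convex_integerHull Q)
    (fun _ => add_intCast_mem_integerHull hd) hy ht

theorem intCast_mem_linealitySpace_integerHull {d : Fin n → ℤ}
    (hd : (↑) ∘ d ∈ linealitySpace ℝ Q) : (↑) ∘ d ∈ linealitySpace ℝ (integerHull Q) := by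
  intro t y hy
  obtain ht | ht := le_total 0 t
  · exact add_smul_intCast_mem_integerHull (fun p hp => by simpa using hd 1 p hp) hy ht
  · have := add_smul_intCast_mem_integerHull (d := -d)
      (fun p hp => by simpa [intCast_comp_neg] using hd (-1) p hp) hy (neg_nonneg.2 ht)
    rwa [intCast_comp_neg, neg_smul_neg] at this

end Hulls

section IntegralPolyhedron

variable {n : ℕ} {ι : Type*} [Finite ι] {A : Matrix ι (Fin n) ℤ} {b : ι → ℤ} {x : Fin n → ℝ}

theorem exists_int_mulVec_eq_of_mem_splitClosure
    (hx : x ∈ splitClosure (intPolyhedron A b)) :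
    ∃ z : Fin n → ℤ, ∀ i ∈ intActiveSet A b x, (A *ᵥ z) i = b i := by
  by_contra no_int
  let T := intActiveSet A b x
  obtain ⟨c, hc⟩ := exists_int_forall_dotProduct_notMem_range ℝ
    (A.submatrix ((↑) : T → ι) id) (fun i => b i)
    fun z hz => no_int ⟨z, fun i hi => congrFun hz ⟨i, hi⟩⟩
  obtain ⟨p, ⟨-, k, hk⟩, hp⟩ :=
    exists_activeSet_subset_of_mem_convexHull (sep_subset _ _) (mem_iInter.1 hx c)
  exact hc p (funext fun i => hp i.2) ⟨k, hk.symm⟩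

theorem mem_integerHull_of_forall_mulVec_eq_zero (hx : x ∈ intPolyhedron A b)
    (hmin : ∀ d : Fin n → ℤ, (∀ i ∈ intActiveSet A b x, (A *ᵥ d) i = 0) → A *ᵥ d = 0)
    {z : Fin n → ℤ} (hz : ∀ i ∈ intActiveSet A b x, (A *ᵥ z) i = b i) :
    x ∈ integerHull (intPolyhedron A b) := by
  let T := intActiveSet A b x
  let V : Submodule ℝ (Fin n → ℝ) := Submodule.span ℝ (((↑) ∘ ·) '' {d : Fin n → ℤ | A *ᵥ d = 0})
  have sub_mem : x - (↑) ∘ z ∈ V := by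
    refine Submodule.span_mono (image_mono fun d hd => hmin d fun i hi => congrFun hd ⟨i, hi⟩)
      (mem_span_image_ker_of_map_mulVec_eq_zero (A.submatrix ((↑) : T → ι) id) (funext fun i => ?_))
    have hzi : (A.map (↑) *ᵥ ((↑) ∘ z)) i = (b i : ℝ) := by
      simpa [map_intCast_mulVec] using hz i i.2
    have hxi : (A.map (↑) *ᵥ x) i = (b i : ℝ) := i.2
    change (A.map (↑) *ᵥ (x - (↑) ∘ z)) i = 0
    rw [mulVec_sub, Pi.sub_apply, hxi, hzi, sub_self]
  have V_le : V ≤ linealitySpace ℝ (intPolyhedron A b) := by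
    refine Submodule.span_le.2 ?_
    rintro _ ⟨d, hd, rfl⟩
    refine ker_mulVecLin_le_linealitySpace _ _ ?_
    simp [map_intCast_mulVec, show A *ᵥ d = 0 from hd]
  have V_le_hull : V ≤ linealitySpace ℝ (integerHull (intPolyhedron A b)) := by
    refine Submodule.span_le.2 ?_
    rintro _ ⟨d, hd, rfl⟩
    exact intCast_mem_linealitySpace_integerHull (V_le (Submodule.subset_span ⟨d, hd, rfl⟩))
  have z_mem : (↑) ∘ z ∈ intPolyhedron A b := by
    simpa using V_le sub_mem (-1) x hx
  simpa using V_le_hull sub_mem 1 _ (intCast_mem_integerHull z_mem)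

theorem mem_integerHull_of_activeSet_ssubset (hx : x ∈ intPolyhedron A b)
    (hlarger : ∀ y ∈ intPolyhedron A b,
      intActiveSet A b x ⊂ intActiveSet A b y → y ∈ integerHull (intPolyhedron A b))
    {d : Fin n → ℤ} (hd : ∀ i ∈ intActiveSet A b x, (A *ᵥ d) i = 0)
    (hne : A *ᵥ d ≠ 0) :
    x ∈ integerHull (intPolyhedron A b) := by
  wlog hpos : ¬ A *ᵥ d ≤ 0 generalizing d
  · refine this (d := -d) (by simpa [mulVec_neg]) (by simpa [mulVec_neg]) fun hneg => hne ?_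
    exact (not_not.1 hpos).antisymm (by simpa [mulVec_neg] using hneg)
  have exists_pos (e : Fin n → ℤ) (he : ∀ i ∈ intActiveSet A b x, (A *ᵥ e) i = 0)
      (hpos : ¬ A *ᵥ e ≤ 0) :
      ∃ t : ℝ, 0 < t ∧ x + t • ((↑) ∘ e) ∈ integerHull (intPolyhedron A b) := by
    obtain ⟨t, ht, hmem, hlt⟩ := exists_activeSet_ssubset_activeSet_add_smul (d := (↑) ∘ e) hx
      (by simpa [map_intCast_mulVec] using he)
      (by simpa [map_intCast_mulVec, Pi.le_def] using hpos)
    exact ⟨t, ht, hlarger _ hmem hlt⟩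
  obtain ⟨t, ht, h_add⟩ := exists_pos d hd hpos
  by_cases hneg : A *ᵥ (-d) ≤ 0
  · have hrec (p) (hp : p ∈ intPolyhedron A b) : p + (↑) ∘ (-d) ∈ intPolyhedron A b :=
      add_mem_polyhedron hp (by simpa [map_intCast_mulVec, Pi.le_def] using hneg)
    simpa [intCast_comp_neg] using add_smul_intCast_mem_integerHull hrec h_add ht.le
  · obtain ⟨s, hs, h_sub⟩ := exists_pos (-d) (by simpa [mulVec_neg]) hneg
    rw [intCast_comp_neg, smul_neg, ← sub_eq_add_neg] at h_sub
    exact mem_of_add_smul_mem_of_sub_smul_mem (convex_integerHull _) hs ht h_add h_sub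

theorem subset_integerHull_of_subset_splitClosure
    (h : intPolyhedron A b ⊆ splitClosure (intPolyhedron A b)) :
    intPolyhedron A b ⊆ integerHull (intPolyhedron A b) := by
  intro x hx
  induction hT : intActiveSet A b x using WellFoundedGT.induction generalizing x with
  | ind T ih =>
  subst hT
  by_cases hmin : ∀ d : Fin n → ℤ, (∀ i ∈ intActiveSet A b x, (A *ᵥ d) i = 0) → A *ᵥ d = 0
  · obtain ⟨z, hz⟩ := exists_int_mulVec_eq_of_mem_splitClosure (h hx)
    exact mem_integerHull_of_forall_mulVec_eq_zero hx hmin hz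
  · push Not at hmin
    obtain ⟨d, hd, hne⟩ := hmin
    exact mem_integerHull_of_activeSet_ssubset hx (fun y hy hlt => ih _ hlt hy rfl) hd hne

end IntegralPolyhedron

/-- If `Q` is a rational polyhedron with `conv(Q ∩ ℤⁿ) ⊊ Q`, then `SC(Q) ⊊ Q`. -/
theorem splitClosure_ssubset_of_integerHull_ssubset
    {n : ℕ} (Q : Set (Fin n → ℝ)) (hQ : IsRationalPolyhedron Q)
    (h : integerHull Q ⊂ Q) :
    splitClosure Q ⊂ Q := by
  obtain ⟨m, A, b, rfl⟩ := hQ.exists_eq_intPolyhedron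
  exact ⟨splitClosure_subset (convex_polyhedron _ _),
    fun hs => h.2 (subset_integerHull_of_subset_splitClosure hs)⟩
end

section
/- Let Q ⊆ ℝⁿ be a nonempty rational polyhedron and P := conv(Q ∩ ℤⁿ). Then there exist a natural number m, vectors c_1,…,c_m ∈ ℤⁿ, integers a_1,…,a_m, and reals b_1,…,b_m with b_i ≥ a_i for all i, such that P = {x ∈ ℝⁿ : c_i·x ≤ a_i for i = 1,…,m} and Q ⊆ {x ∈ ℝⁿ : c_i·x ≤ b_i for i = 1,…,m}. -/
open Set

open scoped Matrix Pointwise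
open Matrix

/-!
Let `V` consist of the rows of a system `0 ≤ A x + b` for `Q`, scaled to be integral, and let `C` be
the dual cone of `V`, i.e. the recession cone of `Q`. The integers `v ⬝ᵥ z`, for `v ∈ V` and `z` an
integral point of `Q`, are bounded below, so by Dickson's lemma finitely many of these points `z`
dominate all the others, and the integer hull is `conv F + C` with `F` finite and integral. By
Minkowski's theorem `C` is generated by integral vectors, so Weyl's theorem applied to the cone over
`{1} × (conv F + C)` gives an integral system for the integer hull. Each of its rows is nonnegative
on `C`, hence by Farkas' lemma a nonnegative combination of rows of `A`, and those are bounded below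
on `Q`. Weyl's theorem is obtained by adding one generator at a time and eliminating its coefficient
as in Fourier–Motzkin, which only multiplies and subtracts, so integrality is preserved.
-/

/-- The vectors all of whose coordinates lie in the subring `R`; for the image of `ℤ` in `ℝ` these
are the points of the standard lattice. -/
def integralVectors {K : Type*} [Ring K] (R : Subring K) (κ : Type*) : Submodule R (κ → K) where
  carrier := {v | ∀ j, v j ∈ R}
  zero_mem' _ := zero_mem R
  add_mem' hv hw j := add_mem (hv j) (hw j)
  smul_mem' r _ hv j := mul_mem r.2 (hv j)

/-- The image of the integers in `K`, as a ring of coefficients for `integralVectors`. -/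
abbrev intSubring (K : Type*) [Ring K] : Subring K := (Int.castRingHom K).range

section IntegralVectors

variable {K κ : Type*} [Ring K] {R : Subring K}

lemma dotProduct_mem_of_mem_integralVectors [Fintype κ] {v w : κ → K}
    (hv : v ∈ integralVectors R κ) (hw : w ∈ integralVectors R κ) : v ⬝ᵥ w ∈ R :=
  sum_mem fun j _ ↦ mul_mem (hv j) (hw j)

lemma single_mem_integralVectors [DecidableEq κ] {r : K} (hr : r ∈ R) (j : κ) :
    Pi.single j r ∈ integralVectors R κ := by
  intro k
  obtain rfl | hkj := eq_or_ne k j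
  · simpa using hr
  · simp [hkj, zero_mem]

lemma vecCons_mem_integralVectors {n : ℕ} {r : K} {u : Fin n → K} (hr : r ∈ R)
    (hu : u ∈ integralVectors R (Fin n)) : vecCons r u ∈ integralVectors R (Fin (n + 1)) :=
  Fin.cases hr hu

end IntegralVectors

section DualCones

variable {K κ : Type*} [CommRing K] [LinearOrder K] [IsOrderedRing K] [Fintype κ]

/-- The dual cone `{x | ∀ v ∈ S, 0 ≤ v ⬝ᵥ x}` of a set of coordinate vectors. -/
def dotDual (S : Set (κ → K)) : PointedCone K (κ → K) :=
  PointedCone.dual (dotProductBilin K K) S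

lemma mem_dotDual {S : Set (κ → K)} {x : κ → K} : x ∈ dotDual S ↔ ∀ v ∈ S, 0 ≤ v ⬝ᵥ x := .rfl

lemma dotDual_hull (S : Set (κ → K)) :
    dotDual (PointedCone.hull K S : Set (κ → K)) = dotDual S :=
  PointedCone.dual_hull S

lemma dotDual_dotDual_dotDual (S : Set (κ → K)) :
    dotDual (dotDual (dotDual S : Set (κ → K)) : Set (κ → K)) = dotDual S := by
  have hflip : (dotProductBilin K K).flip = (dotProductBilin K K : (κ → K) →ₗ[K] _) :=
    LinearMap.ext₂ fun v w ↦ dotProduct_comm w v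
  simpa only [hflip] using! PointedCone.dual_dual_flip_dual (p := dotProductBilin K K) S

lemma exists_finite_dotDual_eq_bot (R : Subring K) :
    ∃ T : Set (κ → K), T.Finite ∧ T ⊆ integralVectors R κ ∧ dotDual T = ⊥ := by
  classical
  refine ⟨range (fun j ↦ Pi.single j 1) ∪ range (fun j ↦ Pi.single j (-1)),
    (finite_range _).union (finite_range _), ?_, ?_⟩
  · rintro _ (⟨j, rfl⟩ | ⟨j, rfl⟩)
    exacts [single_mem_integralVectors (one_mem R) j,
      single_mem_integralVectors (neg_mem (one_mem R)) j]
  · refine eq_bot_iff.2 fun x hx ↦ funext fun j ↦ le_antisymm ?_ ?_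
    · simpa using mem_dotDual.1 hx _ (.inr ⟨j, rfl⟩)
    · simpa using mem_dotDual.1 hx _ (.inl ⟨j, rfl⟩)

lemma bddBelow_dotProduct_image_of_mem_hull {V Q : Set (κ → K)}
    (hV : ∀ v ∈ V, BddBelow ((v ⬝ᵥ ·) '' Q)) {c : κ → K} (hc : c ∈ PointedCone.hull K V) :
    BddBelow ((c ⬝ᵥ ·) '' Q) := by
  induction hc using Submodule.span_induction with
  | mem v hv => exact hV v hv
  | zero => exact ⟨0, by simp [mem_lowerBounds]⟩
  | add v w _ _ hv hw =>
    obtain ⟨k, hk⟩ := hv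
    obtain ⟨l, hl⟩ := hw
    refine ⟨k + l, forall_mem_image.2 fun x hx ↦ ?_⟩
    rw [add_dotProduct]
    exact add_le_add (hk (mem_image_of_mem _ hx)) (hl (mem_image_of_mem _ hx))
  | smul r v _ hv =>
    obtain ⟨l, hl⟩ := hv
    refine ⟨r * l, forall_mem_image.2 fun x hx ↦ ?_⟩
    rw [smul_dotProduct]
    exact mul_le_mul_of_nonneg_left (hl (mem_image_of_mem _ hx)) r.2

lemma mem_hull_insert {E : Type*} [AddCommGroup E] [Module K E] {S : Set E} {v x : E} :
    x ∈ PointedCone.hull K (insert v S) ↔ ∃ r : K, 0 ≤ r ∧ x - r • v ∈ PointedCone.hull K S := by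
  simp only [PointedCone.hull, Submodule.mem_span_insert, Subtype.exists, Nonneg.mk_smul]
  constructor
  · rintro ⟨r, hr, y, hy, rfl⟩
    exact ⟨r, hr, by simpa using hy⟩
  · rintro ⟨r, hr, hy⟩
    exact ⟨r, hr, _, hy, by simp⟩

end DualCones

section Elimination

variable {K κ : Type*} [CommRing K] [LinearOrder K] [Fintype κ]

/-- The inequalities obtained from the system `0 ≤ t ⬝ᵥ x`, `t ∈ T`, by Fourier–Motzkin elimination
of `r` from `0 ≤ r` and `0 ≤ t ⬝ᵥ (x - r • v)`: the upper bounds on `r` come from `0 < t ⬝ᵥ v`, the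
lower bounds from `t ⬝ᵥ v < 0` and from `0 ≤ r`. -/
def eliminateRay (T : Set (κ → K)) (v : κ → K) : Set (κ → K) :=
  {t ∈ T | 0 ≤ t ⬝ᵥ v} ∪
    image2 (fun t u ↦ (t ⬝ᵥ v) • u - (u ⬝ᵥ v) • t) {t ∈ T | 0 < t ⬝ᵥ v} {u ∈ T | u ⬝ᵥ v < 0}

lemma finite_eliminateRay {T : Set (κ → K)} (hT : T.Finite) (v : κ → K) :
    (eliminateRay T v).Finite :=
  (hT.sep _).union ((hT.sep _).image2 _ (hT.sep _))

lemma eliminateRay_subset_integralVectors {R : Subring K} {T : Set (κ → K)} {v : κ → K}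
    (hT : T ⊆ integralVectors R κ) (hv : v ∈ integralVectors R κ) :
    eliminateRay T v ⊆ integralVectors R κ := by
  rintro _ (⟨ht, -⟩ | ⟨t, ⟨ht, -⟩, u, ⟨hu, -⟩, rfl⟩)
  · exact hT ht
  · have htv := dotProduct_mem_of_mem_integralVectors (hT ht) hv
    have huv := dotProduct_mem_of_mem_integralVectors (hT hu) hv
    exact sub_mem (Submodule.smul_mem _ (⟨_, htv⟩ : R) (hT hu))
      (Submodule.smul_mem _ (⟨_, huv⟩ : R) (hT ht))

end Elimination

section WeylMinkowski

variable {K κ : Type*} [Field K] [LinearOrder K] [IsStrictOrderedRing K] [Fintype κ]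

lemma exists_nonneg_forall_mul_le {ι : Type*} {T : Set ι} (hT : T.Finite) {a c : ι → K}
    (hc : ∀ t ∈ T, 0 ≤ a t → 0 ≤ c t)
    (hac : ∀ t ∈ T, ∀ u ∈ T, 0 < a t → a u < 0 → a u * c t ≤ a t * c u) :
    ∃ r : K, 0 ≤ r ∧ ∀ t ∈ T, r * a t ≤ c t := by
  have hfin : (insert 0 ((fun u ↦ c u / a u) '' {u ∈ T | a u < 0})).Finite :=
    ((hT.sep _).image _).insert 0
  obtain ⟨r, hr, hr_max⟩ := exists_max_image _ id hfin (insert_nonempty ..)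
  refine ⟨r, hr_max _ (mem_insert ..), fun t ht ↦ ?_⟩
  obtain hat | hat | hat := lt_trichotomy (a t) 0
  · exact (div_le_iff_of_neg hat).1 (hr_max _ (mem_insert_of_mem _ ⟨t, ⟨ht, hat⟩, rfl⟩))
  · simpa [hat] using hc t ht hat.ge
  · rw [← le_div_iff₀ hat]
    obtain rfl | ⟨u, ⟨hu, hau⟩, rfl⟩ := hr
    · exact div_nonneg (hc t ht hat.le) hat.le
    · rw [div_le_iff_of_neg hau, div_mul_eq_mul_div, div_le_iff₀ hat]
      linarith [hac t ht u hu hat hau]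

lemma mem_dotDual_eliminateRay {T : Set (κ → K)} (hT : T.Finite) {v x : κ → K} :
    x ∈ dotDual (eliminateRay T v) ↔ ∃ r : K, 0 ≤ r ∧ x - r • v ∈ dotDual T := by
  simp only [mem_dotDual, dotProduct_sub, dotProduct_smul, smul_eq_mul, sub_nonneg]
  constructor
  · refine fun hx ↦ exists_nonneg_forall_mul_le hT (fun t ht htv ↦ hx _ (.inl ⟨ht, htv⟩))
      fun t ht u hu htv huv ↦ ?_
    simpa [sub_dotProduct] using hx _ (.inr ⟨t, ⟨ht, htv⟩, u, ⟨hu, huv⟩, rfl⟩)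
  · rintro ⟨r, hr, hx⟩ _ (⟨ht, htv⟩ | ⟨t, ⟨ht, htv⟩, u, ⟨hu, huv⟩, rfl⟩)
    · exact (mul_nonneg hr htv).trans (hx _ ht)
    · simp only [sub_dotProduct, smul_dotProduct, smul_eq_mul, sub_nonneg]
      calc (u ⬝ᵥ v) * (t ⬝ᵥ x) ≤ (u ⬝ᵥ v) * (r * (t ⬝ᵥ v)) :=
            mul_le_mul_of_nonpos_left (hx _ ht) huv.le
        _ = (t ⬝ᵥ v) * (r * (u ⬝ᵥ v)) := by ring
        _ ≤ (t ⬝ᵥ v) * (u ⬝ᵥ x) := mul_le_mul_of_nonneg_left (hx _ hu) htv.le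

theorem exists_finite_dotDual_eq_hull {R : Subring K} {S : Set (κ → K)} (hS : S.Finite)
    (hSR : S ⊆ integralVectors R κ) :
    ∃ T : Set (κ → K), T.Finite ∧ T ⊆ integralVectors R κ ∧
      dotDual T = PointedCone.hull K S := by
  induction S, hS using Set.Finite.induction_on with
  | empty => simpa using exists_finite_dotDual_eq_bot R
  | @insert v S _ _ ih =>
    obtain ⟨hvR, hSR⟩ := insert_subset_iff.1 hSR
    obtain ⟨T, hT, hTR, hTS⟩ := ih hSR
    refine ⟨eliminateRay T v, finite_eliminateRay hT v,
      eliminateRay_subset_integralVectors hTR hvR, ?_⟩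
    ext x
    rw [mem_dotDual_eliminateRay hT, mem_hull_insert, hTS]

theorem dotDual_dotDual_of_finite {S : Set (κ → K)} (hS : S.Finite) :
    dotDual (dotDual S : Set (κ → K)) = PointedCone.hull K S := by
  obtain ⟨T, -, -, hTS⟩ := exists_finite_dotDual_eq_hull (R := ⊤) hS fun _ _ _ ↦ trivial
  rw [← dotDual_hull S, ← hTS, dotDual_dotDual_dotDual]

theorem exists_finite_hull_eq_dotDual {R : Subring K} {S : Set (κ → K)} (hS : S.Finite)
    (hSR : S ⊆ integralVectors R κ) :
    ∃ T : Set (κ → K), T.Finite ∧ T ⊆ integralVectors R κ ∧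
      PointedCone.hull K T = dotDual S := by
  obtain ⟨T, hT, hTR, hTS⟩ := exists_finite_dotDual_eq_hull hS hSR
  exact ⟨T, hT, hTR, by rw [← dotDual_dotDual_of_finite hT, hTS, dotDual_hull]⟩

end WeylMinkowski

section Homogenization

variable {K : Type*} [Field K] [LinearOrder K] [IsStrictOrderedRing K] {n : ℕ}

lemma vecCons_one_mem_hull_image {F : Set (Fin n → K)} {x : Fin n → K} :
    vecCons 1 x ∈ PointedCone.hull K (vecCons 1 '' F) ↔ x ∈ convexHull K F := by
  constructor
  · intro hx
    obtain ⟨s, hsF, c, hc⟩ := (Submodule.mem_span_image_iff_exists_fun _).1 hx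
    replace hc : ∑ f : s, (c f : K) • vecCons 1 (f : Fin n → K) = vecCons 1 x := hc
    refine mem_convexHull_of_exists_fintype (fun f ↦ (c f : K)) (fun f : s ↦ (f : Fin n → K))
      (fun f ↦ (c f).2) ?_ (fun f ↦ hsF f.2) (funext fun j ↦ ?_)
    · simpa [-Nonneg.coe_smul] using congrFun hc 0
    · simpa using congrFun hc j.succ
  · have hconvex :
        Convex K (vecCons 1 ⁻¹' (PointedCone.hull K (vecCons 1 '' F) : Set (Fin (n + 1) → K))) := by
      intro y hy z hz a b ha hb hab
      rw [mem_preimage, SetLike.mem_coe] at hy hz ⊢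
      simpa [hab] using add_mem (PointedCone.smul_mem _ ha hy) (PointedCone.smul_mem _ hb hz)
    exact fun hx ↦ convexHull_min (image_subset_iff.1 PointedCone.subset_hull) hconvex hx

lemma coe_hull_image_vecCons_zero (G : Set (Fin n → K)) :
    (PointedCone.hull K (vecCons 0 '' G) : Set (Fin (n + 1) → K)) =
      vecCons 0 '' (PointedCone.hull K G : Set (Fin n → K)) :=
  congrArg SetLike.coe (Submodule.map_span
    ((LinearMap.vecCons (0 : (Fin n → K) →ₗ[K] K) LinearMap.id).restrictScalars _) G).symm

lemma vecCons_one_mem_hull_union {F G : Set (Fin n → K)} {x : Fin n → K} :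
    vecCons 1 x ∈ PointedCone.hull K (vecCons 1 '' F ∪ vecCons 0 '' G) ↔
      x ∈ convexHull K F + (PointedCone.hull K G : Set (Fin n → K)) := by
  rw [PointedCone.hull, Submodule.span_union, Submodule.mem_sup]
  simp only [← SetLike.mem_coe, coe_hull_image_vecCons_zero, exists_mem_image, mem_add]
  constructor
  · rintro ⟨y, hy, z, hz, hyz⟩
    have hy_eq : y = vecCons 1 (x - z) := by
      rw [eq_sub_of_add_eq hyz, cons_sub_cons, sub_zero]
    rw [hy_eq, SetLike.mem_coe, vecCons_one_mem_hull_image] at hy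
    exact ⟨x - z, hy, z, hz, sub_add_cancel x z⟩
  · rintro ⟨y, hy, z, hz, rfl⟩
    exact ⟨_, vecCons_one_mem_hull_image.2 hy, z, hz, by simp⟩

end Homogenization

section ConvexRecession

variable {K E : Type*} [Field K] [LinearOrder K] [IsStrictOrderedRing K] [Archimedean K]
  [AddCommGroup E] [Module K E]

lemma add_smul_mem_of_convex {C : Set E} (hC : Convex K C) {g : E} (hg : ∀ x ∈ C, x + g ∈ C)
    {x : E} (hx : x ∈ C) {r : K} (hr : 0 ≤ r) : x + r • g ∈ C := by
  have hnat (k : ℕ) : x + (k : K) • g ∈ C := by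
    induction k with
    | zero => simpa
    | succ k ih => simpa [add_smul, add_assoc] using hg _ ih
  obtain ⟨N, hN⟩ := exists_nat_gt r
  have hN_pos : (0 : K) < N := hr.trans_lt hN
  have h := hC.add_smul_mem hx (hnat N) ⟨div_nonneg hr hN_pos.le, (div_le_one hN_pos).2 hN.le⟩
  rwa [smul_smul, div_mul_cancel₀ _ hN_pos.ne'] at h

lemma add_hull_subset_of_convex {C G : Set E} (hC : Convex K C) (hG : C + G ⊆ C) :
    C + (PointedCone.hull K G : Set E) ⊆ C := by
  suffices h : ∀ y ∈ PointedCone.hull K G, ∀ r : K, 0 ≤ r → ∀ x ∈ C, x + r • y ∈ C by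
    rintro _ ⟨x, hx, y, hy, rfl⟩
    simpa using h y hy 1 zero_le_one x hx
  intro y hy
  induction hy using Submodule.span_induction with
  | mem g hg =>
    exact fun r hr x hx ↦ add_smul_mem_of_convex hC (fun z hz ↦ hG (add_mem_add hz hg)) hx hr
  | zero => simp
  | add y z _ _ ihy ihz =>
    intro r hr x hx
    rw [smul_add, ← add_assoc]
    exact ihz r hr _ (ihy r hr x hx)
  | smul s y _ ih =>
    intro r hr x hx
    simpa only [mul_smul] using! ih (r * s) (mul_nonneg hr s.2) x hx

end ConvexRecession

section FiniteGeneration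

lemma exists_finite_subset_forall_exists_le_of_isPWO {α : Type*} [PartialOrder α] {S : Set α}
    (hS : S.IsPWO) : ∃ M ⊆ S, M.Finite ∧ ∀ y ∈ S, ∃ m ∈ M, m ≤ y := by
  refine ⟨{y | Minimal (· ∈ S) y}, fun _ hy ↦ hy.prop, ?_, fun y hy ↦ ?_⟩
  · exact (setOfPred_minimal_antichain _).finite_of_partiallyWellOrderedOn
      (hS.mono fun _ hy ↦ hy.prop)
  · obtain ⟨m, hmy, hm⟩ := hS.exists_le_minimal hy
    exact ⟨m, hm, hmy⟩

lemma isPWO_of_bddBelow {ι : Type*} [Finite ι] {S : Set (ι → ℤ)} (hS : BddBelow S) : S.IsPWO := by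
  obtain ⟨l, hl⟩ := hS
  exact (IsPWO.pi fun i ↦ (bddBelow_Ici (a := l i)).isWF.isPWO).mono fun x hx i _ ↦ hl hx i

variable {K κ : Type*} [Field K] [LinearOrder K] [IsStrictOrderedRing K] [FloorRing K] [Fintype κ]

lemma intCast_floor_of_mem_intSubring {r : K} (hr : r ∈ intSubring K) : (⌊r⌋ : K) = r := by
  obtain ⟨z, rfl⟩ := hr
  simp

lemma exists_finite_subset_forall_sub_mem_dotDual {V Z : Set (κ → K)} (hV : V.Finite)
    (hVint : V ⊆ integralVectors (intSubring K) κ)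
    (hZint : Z ⊆ integralVectors (intSubring K) κ)
    (hbdd : ∀ v ∈ V, BddBelow ((v ⬝ᵥ ·) '' Z)) :
    ∃ F ⊆ Z, F.Finite ∧ ∀ z ∈ Z, ∃ f ∈ F, z - f ∈ dotDual V := by
  have := hV.to_subtype
  choose! l hl using hbdd
  let values (z : κ → K) (v : V) : ℤ := ⌊v ⬝ᵥ z⌋
  have hvalues : BddBelow (values '' Z) := by
    refine ⟨fun v ↦ ⌊l v⌋, ?_⟩
    rintro _ ⟨z, hz, rfl⟩ v
    exact Int.floor_le_floor (hl v v.2 (mem_image_of_mem _ hz))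
  obtain ⟨F, hFZ, hF, hle⟩ := exists_subset_image_finite_and.1
    (exists_finite_subset_forall_exists_le_of_isPWO (isPWO_of_bddBelow hvalues))
  refine ⟨F, hFZ, hF, fun z hz ↦ ?_⟩
  obtain ⟨_, ⟨f, hf, rfl⟩, hfz⟩ := hle _ (mem_image_of_mem _ hz)
  refine ⟨f, hf, fun v hv ↦ ?_⟩
  have hcast {y} (hy : y ∈ Z) : (⌊v ⬝ᵥ y⌋ : K) = v ⬝ᵥ y :=
    intCast_floor_of_mem_intSubring (dotProduct_mem_of_mem_integralVectors (hVint hv) (hZint hy))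
  have hfz_v : v ⬝ᵥ f ≤ v ⬝ᵥ z := by
    rw [← hcast hz, ← hcast (hFZ hf)]
    exact_mod_cast hfz ⟨v, hv⟩
  simpa [dotProduct_sub] using hfz_v

lemma exists_finite_convexHull_eq_add_dotDual {V Z : Set (κ → K)} (hV : V.Finite)
    (hVint : V ⊆ integralVectors (intSubring K) κ)
    (hZint : Z ⊆ integralVectors (intSubring K) κ)
    (hbdd : ∀ v ∈ V, BddBelow ((v ⬝ᵥ ·) '' Z))
    (hadd : ∀ z ∈ Z, ∀ g ∈ integralVectors (intSubring K) κ, g ∈ dotDual V → z + g ∈ Z) :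
    ∃ F ⊆ Z, F.Finite ∧ convexHull K Z = convexHull K F + (dotDual V : Set (κ → K)) := by
  have : Archimedean K := FloorRing.archimedean K
  obtain ⟨F, hFZ, hF, hsub⟩ :=
    exists_finite_subset_forall_sub_mem_dotDual hV hVint hZint hbdd
  obtain ⟨G, -, hGint, hGV⟩ := exists_finite_hull_eq_dotDual hV hVint
  refine ⟨F, hFZ, hF, (convexHull_min (fun z hz ↦ ?_) ?_).antisymm ?_⟩
  · obtain ⟨f, hf, hzf⟩ := hsub z hz
    exact ⟨f, subset_convexHull K F hf, z - f, hzf, add_sub_cancel f z⟩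
  · exact (convex_convexHull K F).add (dotDual V).convex
  · have hZG : Z + G ⊆ Z := by
      rintro _ ⟨z, hz, g, hg, rfl⟩
      exact hadd z hz g (hGint hg) (hGV.le (PointedCone.subset_hull hg))
    have hconv : convexHull K Z + G ⊆ convexHull K Z := by
      grw [subset_convexHull K G, ← convexHull_add, hZG]
    rw [← hGV]
    grw [convexHull_mono hFZ]
    exact add_hull_subset_of_convex (convex_convexHull K Z) hconv

end FiniteGeneration

section IntegralSystems

variable {K : Type*} [Field K] [LinearOrder K] [IsStrictOrderedRing K] {n : ℕ}

theorem exists_finite_mem_dotDual_vecCons_one_iff {R : Subring K} {F V : Set (Fin n → K)}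
    (hF : F.Finite) (hFR : F ⊆ integralVectors R (Fin n))
    (hV : V.Finite) (hVR : V ⊆ integralVectors R (Fin n)) :
    ∃ T : Set (Fin (n + 1) → K), T.Finite ∧ T ⊆ integralVectors R (Fin (n + 1)) ∧
      (∀ x, vecCons 1 x ∈ dotDual T ↔ x ∈ convexHull K F + (dotDual V : Set (Fin n → K))) ∧
      ∀ t ∈ T, vecTail t ∈ PointedCone.hull K V := by
  obtain ⟨G, hG, hGR, hGV⟩ := exists_finite_hull_eq_dotDual hV hVR
  have hgenR : vecCons 1 '' F ∪ vecCons 0 '' G ⊆ (integralVectors R (Fin (n + 1)) : Set _) :=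
    union_subset (image_subset_iff.2 fun _ hf ↦ vecCons_mem_integralVectors (one_mem R) (hFR hf))
      (image_subset_iff.2 fun _ hg ↦ vecCons_mem_integralVectors (zero_mem R) (hGR hg))
  obtain ⟨T, hT, hTR, hTgen⟩ :=
    exists_finite_dotDual_eq_hull ((hF.image _).union (hG.image _)) hgenR
  refine ⟨T, hT, hTR, fun x ↦ ?_, fun t ht ↦ ?_⟩
  · rw [hTgen, vecCons_one_mem_hull_union, hGV]
  · rw [← dotDual_dotDual_of_finite hV, ← hGV, dotDual_hull]
    intro g hg
    have h : vecCons 0 g ∈ dotDual T := hTgen.ge (PointedCone.subset_hull (.inr ⟨g, hg, rfl⟩))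
    simpa [dotProduct_comm g] using mem_dotDual.1 h t ht

theorem exists_finite_integral_system_convexHull [FloorRing K] {ι : Type*} [Finite ι]
    {A : ι → Fin n → K} (hA : ∀ i, A i ∈ integralVectors (intSubring K) (Fin n))
    {b : ι → K} {Q : Set (Fin n → K)} (hQ : Q = {x | ∀ i, b i ≤ A i ⬝ᵥ x}) :
    ∃ T : Set (Fin (n + 1) → K), T.Finite ∧
      T ⊆ integralVectors (intSubring K) (Fin (n + 1)) ∧
      (∀ x, vecCons 1 x ∈ dotDual T ↔
        x ∈ convexHull K (Q ∩ integralVectors (intSubring K) (Fin n))) ∧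
      ∀ t ∈ T, BddBelow ((vecTail t ⬝ᵥ ·) '' Q) := by
  have hV := finite_range A
  have hVint := range_subset_iff.2 hA
  have hbdd : ∀ v ∈ range A, BddBelow ((v ⬝ᵥ ·) '' Q) :=
    forall_mem_range.2 fun i ↦ ⟨b i, forall_mem_image.2 fun x hx ↦ (hQ ▸ hx) i⟩
  obtain ⟨F, hFZ, hF, hFV⟩ := exists_finite_convexHull_eq_add_dotDual hV hVint
    (Z := Q ∩ integralVectors (intSubring K) (Fin n)) inter_subset_right
    (fun v hv ↦ (hbdd v hv).mono (image_mono inter_subset_left)) fun z ⟨hzQ, hz⟩ g hg hgV ↦ by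
      subst hQ
      refine ⟨fun i ↦ ?_, add_mem hz hg⟩
      rw [dotProduct_add]
      exact le_add_of_le_of_nonneg (hzQ i) (hgV (mem_range_self i))
  obtain ⟨T, hT, hTint, hTF, hTV⟩ :=
    exists_finite_mem_dotDual_vecCons_one_iff hF (hFZ.trans inter_subset_right) hV hVint
  exact ⟨T, hT, hTint, fun x ↦ (hTF x).trans (by rw [hFV]),
    fun t ht ↦ bddBelow_dotProduct_image_of_mem_hull hbdd (hTV t ht)⟩

end IntegralSystems

section RationalSystems

lemma exists_pos_natCast_smul_mem_integralVectors (K : Type*) [Field K] [CharZero K] {κ : Type*}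
    [Finite κ] (q : κ → ℚ) :
    ∃ d : ℕ, 0 < d ∧
      (d : K) • (fun j ↦ (q j : K)) ∈ integralVectors (intSubring K) κ := by
  have := Fintype.ofFinite κ
  refine ⟨∏ j, (q j).den, Finset.prod_pos fun j _ ↦ (q j).pos, fun j ↦ ?_⟩
  obtain ⟨k, hk⟩ := Finset.dvd_prod_of_mem (fun j ↦ (q j).den) (Finset.mem_univ j)
  have hnum : ((q j).den : K) * (q j : K) = (q j).num := by
    exact_mod_cast congrArg (Rat.cast : ℚ → K) (Rat.den_mul_eq_num (q j))
  refine ⟨k * (q j).num, ?_⟩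
  calc Int.castRingHom K (k * (q j).num) = k * ((q j).den * q j) := by simp [hnum]
    _ = ((∏ j, (q j).den : ℕ) : K) * q j := by rw [hk, Nat.cast_mul]; ring

lemma exists_integral_rows {K : Type*} [Field K] [LinearOrder K] [IsStrictOrderedRing K]
    {ι κ : Type*} [Fintype κ] (A : Matrix ι κ ℚ) (b : ι → K) :
    ∃ (A' : ι → κ → K) (b' : ι → K),
      (∀ i, A' i ∈ integralVectors (intSubring K) κ) ∧
      {x | ∀ i, ∑ j, (A i j : K) * x j ≤ b i} = {x | ∀ i, b' i ≤ A' i ⬝ᵥ x} := by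
  choose d hd hdA using fun i ↦ exists_pos_natCast_smul_mem_integralVectors K (A i)
  refine ⟨fun i ↦ -((d i : K) • fun j ↦ (A i j : K)), fun i ↦ -(d i * b i),
    fun i ↦ neg_mem (hdA i), ?_⟩
  ext x
  refine forall_congr' fun i ↦ ?_
  rw [neg_dotProduct, smul_dotProduct, smul_eq_mul, neg_le_neg_iff,
    mul_le_mul_iff_right₀ (Nat.cast_pos.2 (hd i)), dotProduct]

lemma integerHull_eq_convexHull_inter {n : ℕ} (Q : Set (Fin n → ℝ)) :
    integerHull Q = convexHull ℝ (Q ∩ integralVectors (intSubring ℝ) (Fin n)) := by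
  refine congrArg (convexHull ℝ) (Set.ext fun x ↦ and_congr_right' <| forall_congr' fun j ↦ ?_)
  simp [eq_comm]

theorem exists_integral_system_for_integer_hull_general {ι : Type*} [Finite ι] {n : ℕ}
    (A : Matrix ι (Fin n) ℚ) (r : ι → ℝ) {Q : Set (Fin n → ℝ)}
    (hQ : Q = {x | ∀ i, ∑ j, (A i j : ℝ) * x j ≤ r i}) :
    ∃ (m : ℕ) (c : Fin m → Fin n → ℤ) (a : Fin m → ℤ) (b : Fin m → ℝ),
      (∀ i, (a i : ℝ) ≤ b i) ∧
      integerHull Q = {x | ∀ i, ∑ j, (c i j : ℝ) * x j ≤ (a i : ℝ)} ∧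
      Q ⊆ {x | ∀ i, ∑ j, (c i j : ℝ) * x j ≤ b i} := by
  obtain ⟨A', r', hA', hAA'⟩ := exists_integral_rows A r
  obtain ⟨T, hT, hTint, hTQ, hbdd⟩ := exists_finite_integral_system_convexHull hA' (hQ.trans hAA')
  obtain ⟨m, t, rfl⟩ := hT.fin_embedding
  choose z hz using fun i ↦ (hTint (mem_range_self i) : ∀ j, t i j ∈ intSubring ℝ)
  choose l hl using fun i ↦ hbdd (t i) (mem_range_self i)
  have hdot (i : Fin m) (x : Fin n → ℝ) :
      ∑ j, ((-z i j.succ : ℤ) : ℝ) * x j = -(vecTail (t i) ⬝ᵥ x) := by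
    simp [dotProduct, vecTail, ← hz]
  refine ⟨m, fun i j ↦ -z i j.succ, fun i ↦ z i 0, fun i ↦ max (z i 0) (-l i),
    fun i ↦ le_max_left _ _, ?_, fun x hx i ↦ ?_⟩
  · ext x
    rw [integerHull_eq_convexHull_inter, ← hTQ, mem_dotDual, forall_mem_range]
    refine forall_congr' fun i ↦ ?_
    rw [hdot, dotProduct_cons, neg_le_iff_add_nonneg', vecHead, mul_one, ← hz, eq_intCast, add_comm]
  · rw [hdot]
    exact le_max_of_le_right (neg_le_neg (hl i (mem_image_of_mem _ hx)))

end RationalSystems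

/-- For a nonempty rational polyhedron `Q` there is an integral system `Cx ≤ a`
defining the integer hull `P = conv(Q ∩ ℤⁿ)` together with right-hand sides `b ≥ a`
such that `Q ⊆ {x : Cx ≤ b}`. -/
theorem exists_integral_system_for_integer_hull
    {n : ℕ} (Q : Set (Fin n → ℝ)) (hQ : IsRationalPolyhedron Q) (hne : Q.Nonempty) :
    ∃ (m : ℕ) (c : Fin m → Fin n → ℤ) (a : Fin m → ℤ) (b : Fin m → ℝ),
      (∀ i, (a i : ℝ) ≤ b i) ∧
      integerHull Q = {x | ∀ i, ∑ j, (c i j : ℝ) * x j ≤ (a i : ℝ)} ∧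
      Q ⊆ {x | ∀ i, ∑ j, (c i j : ℝ) * x j ≤ b i} := by
  obtain ⟨m, A, b, hQ⟩ := hQ
  exact exists_integral_system_for_integer_hull_general A (fun i ↦ b i) hQ
end

section
/- Let g_1,…,g_k ∈ ℚⁿ be linearly independent vectors (1 ≤ k ≤ n). Then there exists a lattice basis w_1,…,w_n of ℤⁿ (i.e. integer vectors such that every point of ℤⁿ is a unique integer linear combination of w_1,…,w_n) with w_1,…,w_k ∈ cone(g_1,…,g_k), where cone(g_1,…,g_k) denotes the set of all nonnegative real linear combinations of g_1,…,g_k. -/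
open Set

/-!
Let `W` be the rational span of the `g j`, and `L` the lattice of integer points of `W`. Some
positive multiple `s` of `∑ j, g j` lies in `L`, and `s` is interior to the cone relative to `W`:
every `x ∈ L` is moved into the cone by adding a large multiple of `s`. Write `s = c • u` with
`c > 0` and `u` a member of a basis of `L`. Then `u` lies in the cone, and adding suitable multiples
of `s`, hence of `u`, to the other basis members moves them into the cone while keeping a basis of
`L`. Finally `ℤⁿ / L` is torsion-free, so the basis of `L` extends to one of `ℤⁿ`.
-/

open Filter Module
open scoped nonZeroDivisors

section Bases

variable {R M ι : Type*} [CommRing R] [AddCommGroup M] [Module R M]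

theorem exists_basis_add_smul (b : Basis ι R M) (i₀ : ι) (a : ι → R) (ha : a i₀ = 0) :
    ∃ b' : Basis ι R M, ∀ i, b' i = b i + a i • b i₀ := by
  have hfix : b.constr R a (b i₀) = 0 := by rw [b.constr_basis, ha]
  refine ⟨b.map (LinearEquiv.transvection hfix), fun i ↦ ?_⟩
  rw [b.map_apply, LinearEquiv.transvection.apply, b.constr_basis]

variable [IsDomain R] [IsPrincipalIdealRing R]

theorem exists_basis_eq_smul [Finite ι] (b : Basis ι R M) {s : M} (hs : s ≠ 0) :
    ∃ (b' : Basis ι R M) (i : ι) (c : R), s = c • b' i := by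
  have := Module.Free.of_basis b
  obtain ⟨m, bM, bN, f, a, snf⟩ := (R ∙ s).smithNormalForm b
  obtain rfl : m = 1 := by
    rw [← Fintype.card_fin m, ← finrank_eq_card_basis bN,
      ← (LinearEquiv.toSpanNonzeroSingleton R M s hs).finrank_eq, finrank_self]
  let s' : R ∙ s := ⟨s, Submodule.mem_span_singleton_self s⟩
  refine ⟨bM, f 0, bN.repr s' 0 * a 0, ?_⟩
  rw [mul_smul, ← snf, ← Submodule.coe_smul, ← Fin.sum_univ_one (fun i ↦ bN.repr s' i • bN i),
    bN.sum_repr]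

theorem exists_basis_castLE_eq [Module.Finite R M] {N : Submodule R M} [IsTorsionFree R (M ⧸ N)]
    {k n : ℕ} (hM : finrank R M = n) (hkn : k ≤ n) (b : Basis (Fin k) R N) :
    ∃ B : Basis (Fin n) R M, ∀ i, B (Fin.castLE hkn i) = b i := by
  let B := (b.sumQuot (finBasis R (M ⧸ N))).reindex finSumFinEquiv
  obtain rfl : n = k + finrank R (M ⧸ N) := by simpa [hM] using finrank_eq_card_basis B
  refine ⟨B, fun i ↦ ?_⟩
  change B (Fin.castAdd _ i) = b i
  simp [B]

end Bases

section Monoids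

variable {L : Type*} [AddCommGroup L] [Module.Free ℤ L] [Module.Finite ℤ L]

theorem exists_basis_eq_nsmul {s : L} (hs : s ≠ 0) :
    ∃ (b : Basis (Fin (finrank ℤ L)) ℤ L) (i : Fin (finrank ℤ L)) (c : ℕ), s = c • b i := by
  obtain ⟨b, i, c, hc⟩ := exists_basis_eq_smul (finBasis ℤ L) hs
  obtain ⟨m, rfl | rfl⟩ := c.eq_nat_or_neg
  · exact ⟨b, i, m, by rw [hc, natCast_zsmul]⟩
  · exact ⟨b.map (LinearEquiv.neg ℤ), i, m, by simp [hc]⟩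

theorem exists_basis_forall_mem_of_saturated (C : AddSubmonoid L)
    (hC : ∀ (d : ℕ) (x : L), d ≠ 0 → d • x ∈ C → x ∈ C)
    {s : L} (hs : ∀ x, ∃ N : ℕ, x + N • s ∈ C) :
    ∃ b : Basis (Fin (finrank ℤ L)) ℤ L, ∀ i, b i ∈ C := by
  rcases eq_or_ne s 0 with rfl | hs₀
  · exact ⟨finBasis ℤ L, fun i ↦ by simpa using hs (finBasis ℤ L i)⟩
  obtain ⟨b, i₀, c, rfl⟩ := exists_basis_eq_nsmul hs₀
  have hc : c ≠ 0 := by rintro rfl; simp at hs₀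
  have hmem : b i₀ ∈ C := by
    obtain ⟨N, hN⟩ := hs (b i₀)
    refine hC (1 + N * c) _ (by positivity) ?_
    rwa [add_smul, one_smul, mul_smul]
  choose N hN using hs
  obtain ⟨b', hb'⟩ := exists_basis_add_smul b i₀
    (Function.update (fun i ↦ (N (b i) * c : ℤ)) i₀ 0) (Function.update_self ..)
  refine ⟨b', fun i ↦ ?_⟩
  rcases eq_or_ne i i₀ with rfl | hi
  · simpa [hb'] using hmem
  · rw [hb', Function.update_of_ne hi, mul_smul, natCast_zsmul, natCast_zsmul]
    exact hN (b i)

end Monoids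

theorem eventually_add_smul_sum_mem_hull {K V ι : Type*} [Ring K] [LinearOrder K] [IsOrderedRing K]
    [AddCommGroup V] [Module K V] [Fintype ι] (g : ι → V) {x : V}
    (hx : x ∈ Submodule.span K (range g)) :
    ∀ᶠ t : K in atTop, x + t • ∑ j, g j ∈ PointedCone.hull K (range g) := by
  obtain ⟨a, rfl⟩ := (Submodule.mem_span_range_iff_exists_fun K).1 hx
  have hcoeff : ∀ᶠ t : K in atTop, ∀ j, -a j ≤ t := eventually_all.2 fun j ↦ eventually_ge_atTop _
  filter_upwards [hcoeff] with t ht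
  rw [Finset.smul_sum, ← Finset.sum_add_distrib]
  refine sum_mem fun j _ ↦ ?_
  rw [← add_smul]
  exact PointedCone.smul_mem _ (neg_le_iff_add_nonneg'.1 (ht j))
    (Submodule.subset_span (mem_range_self j))

section LatticePoints

variable {R K M V : Type*} [CommRing R] [Field K] [Algebra R K] [AddCommGroup M] [Module R M]
  [AddCommGroup V] [Module R V] [Module K V] [IsScalarTower R K V]

/-- The lattice points of the subspace `W ≤ V`, for a lattice `M` in `V`. They form a submodule of
`M` and not of `V`: the lattice is encoded by its inclusion `φ`, as for `ℤⁿ → ℚⁿ`. -/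
def latticePoints (φ : M →ₗ[R] V) (W : Submodule K V) : Submodule R M :=
  (W.restrictScalars R).comap φ

instance isTorsionFree_quotient_latticePoints [IsDomain R] [FaithfulSMul R K]
    (φ : M →ₗ[R] V) (W : Submodule K V) : IsTorsionFree R (M ⧸ latticePoints φ W) := by
  have : IsTorsionFree R (V ⧸ W) := .trans_faithfulSMul R K _
  let f : M →ₗ[R] V ⧸ W := W.mkQ.restrictScalars R ∘ₗ φ
  have hker : latticePoints φ W = LinearMap.ker f := by
    ext x; simp [latticePoints, f]
  have hinj := LinearMap.ker_eq_bot.1 (Submodule.ker_liftQ_eq_bot _ f hker.le hker.ge)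
  exact hinj.moduleIsTorsionFree _ (map_smul _)

theorem finrank_latticePoints [IsFractionRing R K] (φ : M →ₗ[R] V) [IsLocalizedModule R⁰ φ]
    (W : Submodule K V) : finrank R (latticePoints φ W) = finrank K W := by
  have hW : (latticePoints φ W).localized' K R⁰ φ = W := (Submodule.localized'gi K R⁰ φ).l_u_eq W
  rw [← IsLocalizedModule.finrank_eq R⁰ ((latticePoints φ W).toLocalized' K R⁰ φ) le_rfl, hW,
    IsLocalization.finrank_eq K R⁰ le_rfl]

end LatticePoints

section RationalCones

variable {M V : Type*} [AddCommGroup M] [AddCommGroup V]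

theorem exists_map_eq_nsmul (φ : M →ₗ[ℤ] V) [IsLocalizedModule ℤ⁰ φ] (v : V) :
    ∃ (m : M) (d : ℕ), d ≠ 0 ∧ φ m = d • v := by
  obtain ⟨⟨m, d⟩, hm : (d : ℤ) • v = φ m⟩ := IsLocalizedModule.surj ℤ⁰ φ v
  have hd : (d : ℤ) ≠ 0 := nonZeroDivisors.coe_ne_zero d
  refine ⟨(d : ℤ).sign • m, (d : ℤ).natAbs, Int.natAbs_ne_zero.2 hd, ?_⟩
  rw [map_smul, ← hm, smul_smul, Int.sign_mul_self_eq_natAbs, natCast_zsmul]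

theorem exists_basis_latticePoints_mem_hull [Module.Free ℤ M] [Module.Finite ℤ M] [Module ℚ V]
    {ι : Type*} [Finite ι] (φ : M →ₗ[ℤ] V) [IsLocalizedModule ℤ⁰ φ] (g : ι → V) :
    ∃ b : Basis (Fin (finrank ℚ (Submodule.span ℚ (range g)))) ℤ
        (latticePoints φ (Submodule.span ℚ (range g))),
      ∀ i, φ (b i) ∈ PointedCone.hull ℚ (range g) := by
  cases nonempty_fintype ι
  set L := latticePoints φ (Submodule.span ℚ (range g))
  let C : AddSubmonoid L :=
    (PointedCone.hull ℚ (range g)).toAddSubmonoid.comap (φ ∘ₗ L.subtype).toAddMonoidHom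
  have hC (d : ℕ) (x : L) (hd : d ≠ 0) (hx : d • x ∈ C) : x ∈ C := by
    have hdx : (d : ℚ) • φ x ∈ PointedCone.hull ℚ (range g) := by
      simpa [C, Nat.cast_smul_eq_nsmul] using hx
    simpa [C, smul_smul, hd] using PointedCone.smul_mem _ (inv_nonneg.2 d.cast_nonneg) hdx
  obtain ⟨s, d, hd, hs⟩ := exists_map_eq_nsmul φ (∑ j, g j)
  have hsL : s ∈ L := by
    change φ s ∈ Submodule.span ℚ (range g)
    rw [hs]
    exact nsmul_mem (sum_mem fun j _ ↦ Submodule.subset_span (mem_range_self j)) d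
  have hunit (x : L) : ∃ N : ℕ, x + N • (⟨s, hsL⟩ : L) ∈ C := by
    have htends : Tendsto (fun N : ℕ ↦ (N : ℚ) * d) atTop atTop :=
      tendsto_natCast_atTop_atTop.atTop_mul_const (by positivity)
    obtain ⟨N, hN⟩ := (htends.eventually (eventually_add_smul_sum_mem_hull g x.2)).exists
    exact ⟨N, by simpa [C, hs, mul_smul, Nat.cast_smul_eq_nsmul] using hN⟩
  rw [← finrank_latticePoints φ (Submodule.span ℚ (range g))]
  exact exists_basis_forall_mem_of_saturated C hC hunit

end RationalCones

theorem exists_real_combination_of_mem_hull {n ι : Type*} [Fintype ι] {g : ι → n → ℚ} {x : n → ℚ}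
    (hx : x ∈ PointedCone.hull ℚ (range g)) :
    ∃ lam : ι → ℝ, (∀ j, 0 ≤ lam j) ∧
      (fun l ↦ (x l : ℝ)) = ∑ j, lam j • (fun l ↦ (g j l : ℝ)) := by
  obtain ⟨c, rfl⟩ := (Submodule.mem_span_range_iff_exists_fun _).1 hx
  refine ⟨fun j ↦ ((c j : ℚ) : ℝ), fun j ↦ Rat.cast_nonneg.2 (c j).2, funext fun l ↦ ?_⟩
  have hsmul (j : ι) : c j • g j l = (c j : ℚ) * g j l := rfl
  simp [Finset.sum_apply, hsmul]

theorem exists_lattice_basis_in_cone_general {n r : ℕ} {ι : Type*} [Fintype ι]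
    (hrn : r ≤ n) (g : ι → Fin n → ℚ) (hr : finrank ℚ (Submodule.span ℚ (range g)) = r) :
    ∃ w : Fin n → Fin n → ℤ,
      (∀ v : Fin n → ℤ, ∃! lam : Fin n → ℤ, v = ∑ i, lam i • w i) ∧
      ∀ i : Fin r, ∃ lam : ι → ℝ, (∀ j, 0 ≤ lam j) ∧
        (fun l => (w (Fin.castLE hrn i) l : ℝ)) =
          ∑ j, lam j • (fun l => (g j l : ℝ)) := by
  let φ : (Fin n → ℤ) →ₗ[ℤ] (Fin n → ℚ) := .pi fun l ↦ Algebra.linearMap ℤ ℚ ∘ₗ .proj l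
  obtain ⟨b, hb⟩ := exists_basis_latticePoints_mem_hull φ g
  obtain ⟨B, hB⟩ := exists_basis_castLE_eq (finrank_fin_fun ℤ) hrn (b.reindex (finCongr hr))
  refine ⟨B, fun v ↦ ?_, fun i ↦ ?_⟩
  · simpa only [B.equivFun_symm_apply, eq_comm] using B.equivFun.symm.bijective.existsUnique v
  have hcone : φ (B (Fin.castLE hrn i)) ∈ PointedCone.hull ℚ (range g) := by
    simpa [hB] using hb ((finCongr hr).symm i)
  obtain ⟨lam, hlam, hsum⟩ := exists_real_combination_of_mem_hull hcone
  exact ⟨lam, hlam, by rw [← hsum]; simp [φ]⟩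

/-- Given linearly independent rational vectors `g₁, …, g_k` (with `1 ≤ k ≤ n`), there is
a lattice basis `w₁, …, w_n` of `ℤⁿ` whose first `k` members lie in the cone generated
by `g₁, …, g_k`. -/
theorem exists_lattice_basis_in_cone
    {n k : ℕ} (hk1 : 1 ≤ k) (hkn : k ≤ n)
    (g : Fin k → Fin n → ℚ) (hg : LinearIndependent ℚ g) :
    ∃ w : Fin n → Fin n → ℤ,
      (∀ v : Fin n → ℤ, ∃! lam : Fin n → ℤ, v = ∑ i, lam i • w i) ∧
      ∀ i : Fin k, ∃ lam : Fin k → ℝ, (∀ j, 0 ≤ lam j) ∧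
        (fun l => (w (Fin.castLE hkn i) l : ℝ)) =
          ∑ j, lam j • (fun l => (g j l : ℝ)) := by
  have hrank : finrank ℚ (Submodule.span ℚ (range g)) = k := by simp [finrank_span_eq_card hg]
  exact exists_lattice_basis_in_cone_general hkn g hrank
end

section
/- Let Q ⊆ ℝⁿ be a rational polyhedron, D ⊆ ℤⁿ a finite set, d ∈ D, and suppose that for every t ≥ 0 the iterate SC_D^t(Q) is nonempty and the maximum u^t_d := max{d·x : x ∈ SC_D^t(Q)} exists. Then either lim_{t→∞} u^t_d = −∞, or there exist a natural number t_d and an integer γ_d such that u^t_d = γ_d for all t ≥ t_d. -/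
/-!
If `d·x ≤ c` holds on `Q`, then the points of `Q` where `d·x` is an integer satisfy `d·x ≤ ⌊c⌋`, and
this inequality passes to their convex hull. Every split closure step in direction `d` thus enforces
the Chvátal–Gomory cut of `d`, so `u (t + 1) ≤ ⌊u t⌋ ≤ u t`. The integers `⌊u t⌋` are nonincreasing:
either they tend to `-∞`, and `u` with them, or they are eventually equal to some `γ`, and then
`γ = ⌊u (t + 1)⌋ ≤ u (t + 1) ≤ ⌊u t⌋ = γ`.
-/

open Set

/-- The `D`-split closure of a set `Q ⊆ ℝⁿ` for a finite set `D` of integer directions. -/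
def splitClosureD {n : ℕ} (D : Finset (Fin n → ℤ)) (Q : Set (Fin n → ℝ)) :
    Set (Fin n → ℝ) :=
  ⋂ d ∈ D, convexHull ℝ {x ∈ Q | ∃ z : ℤ, ∑ i, (d i : ℝ) * x i = (z : ℝ)}

open Filter

theorem floor_mem_upperBounds_image_convexHull {𝕜 E : Type*} [Ring 𝕜] [LinearOrder 𝕜]
    [IsStrictOrderedRing 𝕜] [FloorRing 𝕜] [AddCommMonoid E] [Module 𝕜 E] (f : E →ₗ[𝕜] 𝕜)
    {s : Set E} {c : 𝕜} (hc : c ∈ upperBounds (f '' s)) :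
    (⌊c⌋ : 𝕜) ∈ upperBounds (f '' convexHull 𝕜 {x ∈ s | ∃ z : ℤ, f x = z}) := by
  have hsub : {x ∈ s | ∃ z : ℤ, f x = z} ⊆ {x | f x ≤ (⌊c⌋ : 𝕜)} := by
    rintro x ⟨hx, z, hz⟩
    have hzc : (z : 𝕜) ≤ c := hz ▸ hc (mem_image_of_mem f hx)
    exact hz.le.trans (Int.cast_le.2 (Int.le_floor.2 hzc))
  exact forall_mem_image.2 (convexHull_min hsub (convex_halfSpace_le f.isLinear _))

theorem floor_mem_upperBounds_image_splitClosureD {n : ℕ} {D : Finset (Fin n → ℤ)}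
    {d : Fin n → ℤ} (hd : d ∈ D) {Q : Set (Fin n → ℝ)} {c : ℝ}
    (hc : c ∈ upperBounds ((fun x => ∑ i, (d i : ℝ) * x i) '' Q)) :
    (⌊c⌋ : ℝ) ∈ upperBounds ((fun x => ∑ i, (d i : ℝ) * x i) '' splitClosureD D Q) :=
  upperBounds_mono_set (image_mono (biInter_subset_of_mem hd))
    (floor_mem_upperBounds_image_convexHull (dotProductBilin ℝ ℝ fun i => (d i : ℝ)) hc)

theorem tendsto_atBot_or_eventually_eq_intCast {R : Type*} [Ring R] [LinearOrder R]
    [IsStrictOrderedRing R] [FloorRing R] {u : ℕ → R} (hu : ∀ t, u (t + 1) ≤ ⌊u t⌋) :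
    Tendsto u atTop atBot ∨ ∃ (T : ℕ) (γ : ℤ), ∀ t ≥ T, u t = γ := by
  have hanti : Antitone u := antitone_nat_of_succ_le fun t => (hu t).trans (Int.floor_le _)
  rcases tendsto_atTop_of_antitone (Int.floor_mono.comp_antitone hanti) with hbot | ⟨γ, hγ⟩
  · refine .inl (tendsto_atBot.2 fun b => ?_)
    filter_upwards [tendsto_atBot.1 hbot (⌊b⌋ - 1)] with t ht
    exact (Int.floor_lt.1 (Int.lt_of_le_sub_one ht)).le.trans (Int.floor_le b)
  · rw [nhds_discrete, tendsto_pure, eventually_atTop] at hγ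
    obtain ⟨T, hT⟩ := hγ
    refine .inr ⟨T + 1, γ, fun t ht => le_antisymm ?_ ?_⟩
    · calc u t ≤ u (T + 1) := hanti ht
        _ ≤ ⌊u T⌋ := hu T
        _ = γ := congrArg Int.cast (hT T le_rfl)
    · calc (γ : R) = ⌊u t⌋ := congrArg Int.cast (hT t (by lia)).symm
        _ ≤ u t := Int.floor_le _

theorem eventually_constant_or_tendsto_atBot_general
    {n : ℕ} {Q : Set (Fin n → ℝ)} {D : Finset (Fin n → ℤ)} {d : Fin n → ℤ} (hd : d ∈ D)
    {u : ℕ → ℝ}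
    (hu : ∀ t : ℕ, IsLUB ((fun x => ∑ i, (d i : ℝ) * x i) '' (splitClosureD D)^[t] Q) (u t)) :
    Tendsto u atTop atBot ∨ ∃ (td : ℕ) (γ : ℤ), ∀ t ≥ td, u t = (γ : ℝ) := by
  refine tendsto_atBot_or_eventually_eq_intCast fun t => (hu (t + 1)).2 ?_
  rw [Function.iterate_succ_apply']
  exact floor_mem_upperBounds_image_splitClosureD hd (hu t).1

/-- If `u t` is the maximum of `d·x` over the `t`-th `D`-split closure of a rational
polyhedron `Q` (assumed to exist for all `t`), then either `u t → -∞`, or `u` is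
eventually constant with an integer value. -/
theorem eventually_constant_or_tendsto_atBot
    {n : ℕ} (Q : Set (Fin n → ℝ)) (hQ : IsRationalPolyhedron Q)
    (D : Finset (Fin n → ℤ)) (d : Fin n → ℤ) (hd : d ∈ D) (u : ℕ → ℝ)
    (hne : ∀ t : ℕ, ((splitClosureD D)^[t] Q).Nonempty)
    (hu : ∀ t : ℕ,
      IsGreatest ((fun x => ∑ i, (d i : ℝ) * x i) '' (splitClosureD D)^[t] Q) (u t)) :
    Filter.Tendsto u Filter.atTop Filter.atBot ∨
      ∃ (td : ℕ) (γ : ℤ), ∀ t ≥ td, u t = (γ : ℝ) :=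
  eventually_constant_or_tendsto_atBot_general hd fun t => (hu t).isLUB
end

section
/- Under the setup described in the context, for every i ∈ {1,…,k} one has the inclusion {x ∈ SC_D^{t_D+1}(Q) : d_i·x = γ_{d_i}} ⊆ {x ∈ ℝⁿ : d_{i−1}·x = γ_{d_{i−1}}}. -/
open Set

/-- The recession cone of a set `Q ⊆ ℝⁿ`. -/
def recCone {n : ℕ} (Q : Set (Fin n → ℝ)) : Set (Fin n → ℝ) :=
  {r | ∀ x ∈ Q, ∀ t : ℝ, 0 ≤ t → x + t • r ∈ Q}

/-!
Suppose `f ≤ β` with `β ∈ ℤ`, `ω ≤ M` and `f' = (2M + 1) f + ω ≤ γ` on `S`, and that `f = β` at some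
point with `ω ≥ -M`, so that `γ ≥ (2M + 1) β - M`. Then `β - f ≤ γ - f'` at every point of `S` where
`f` is an integer: if `f = β` this says `f' ≤ γ`, and if `f ≤ β - 1` then
`2M f + ω ≤ 2M (β - 1) + M = 2M β - M ≤ γ - β`. Being affine, the inequality passes to the convex
hull of these points, where `f' = γ` therefore forces `f = β`. Applying this to consecutive
directions, induction carries the lower bound on `wᵢ` from the face of `d₀` to that of `dᵢ₋₁`.
-/

section SplitHull

variable {V : Type*} [AddCommGroup V] [Module ℝ V]

/-- The split hull `conv {x ∈ S | f x ∈ ℤ}` of `S` along a linear functional `f`. Split closures are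
intersections of such hulls, with `f` integral on the lattice; here `f` is arbitrary. -/
def splitHull (f : Module.Dual ℝ V) (S : Set V) : Set V :=
  convexHull ℝ {x ∈ S | ∃ z : ℤ, f x = z}

variable {S : Set V} {f ω : Module.Dual ℝ V}

lemma splitHull_subset_of_subset {T : Set V} (hT : Convex ℝ T) (hST : S ⊆ T) :
    splitHull f S ⊆ T :=
  convexHull_min (fun _ hy => hST hy.1) hT

lemma apply_le_of_mem_splitHull {g : Module.Dual ℝ V} {b : ℝ}
    (h : ∀ y ∈ S, ∀ z : ℤ, f y = z → g y ≤ b) {x : V} (hx : x ∈ splitHull f S) : g x ≤ b := by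
  have hull_subset_halfSpace : splitHull f S ⊆ {x | g x ≤ b} :=
    convexHull_min (fun y ⟨hyS, z, hz⟩ => h y hyS z hz) (convex_halfSpace_le g.isLinear b)
  exact hull_subset_halfSpace hx

lemma sub_le_sub_of_mem_splitHull {M γ : ℝ} {β : ℤ} (hM : 0 ≤ M)
    (hf : ∀ y ∈ S, f y ≤ β) (hω : ∀ y ∈ S, ω y ≤ M)
    (hf' : ∀ y ∈ S, ((2 * M + 1) • f + ω) y ≤ γ) (hγ : (2 * M + 1) * β - M ≤ γ)
    {x : V} (hx : x ∈ splitHull f S) :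
    β - f x ≤ γ - ((2 * M + 1) • f + ω) x := by
  suffices h : ((2 * M + 1) • f + ω - f) x ≤ γ - β by
    rw [LinearMap.sub_apply] at h
    linarith
  refine apply_le_of_mem_splitHull (fun y hyS z hz => ?_) hx
  have hzβ : z ≤ β := by exact_mod_cast hz ▸ hf y hyS
  rw [LinearMap.sub_apply]
  rcases hzβ.eq_or_lt with rfl | hlt
  · linarith [hf' y hyS]
  · have hgap : f y ≤ β - 1 := by
      rw [hz]
      exact_mod_cast Int.le_sub_one_of_lt hlt
    calc ((2 * M + 1) • f + ω) y - f y
        = 2 * M * f y + ω y := by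
          simp only [LinearMap.add_apply, LinearMap.smul_apply, smul_eq_mul]
          ring
      _ ≤ 2 * M * (β - 1) + M := by
          gcongr
          exact hω y hyS
      _ ≤ γ - β := by linarith

lemma apply_eq_of_mem_splitHull {M γ : ℝ} {β : ℤ}
    (hf : ∀ y ∈ S, f y ≤ β) (hω : ∀ y ∈ S, ω y ≤ M)
    (hf' : ∀ y ∈ S, ((2 * M + 1) • f + ω) y ≤ γ)
    {z : V} (hz : z ∈ splitHull f S) (hfz : f z = β) (hωz : -M ≤ ω z)
    {x : V} (hx : x ∈ splitHull f S) (hf'x : ((2 * M + 1) • f + ω) x = γ) : f x = β := by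
  have hM : 0 ≤ M := by
    have hωzM : ω z ≤ M := apply_le_of_mem_splitHull (fun y hy _ _ => hω y hy) hz
    linarith
  have hγ : (2 * M + 1) * β - M ≤ γ := by
    have hf'z := apply_le_of_mem_splitHull (fun y hy _ _ => hf' y hy) hz
    simp only [LinearMap.add_apply, LinearMap.smul_apply, smul_eq_mul, hfz] at hf'z
    linarith
  apply le_antisymm (apply_le_of_mem_splitHull (fun y hy _ _ => hf y hy) hx)
  linarith [sub_le_sub_of_mem_splitHull hM hf hω hf' hγ hx]

theorem apply_castSucc_eq_of_apply_succ_eq {k : ℕ} {P : Set V}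
    {f : Fin (k + 1) → Module.Dual ℝ V} {ω : Fin k → Module.Dual ℝ V}
    {M : Fin k → ℝ} {β : Fin (k + 1) → ℤ}
    (hf : ∀ i : Fin k, f i.succ = (2 * M i + 1) • f i.castSucc + ω i)
    (hP : ∀ i : Fin k, P ⊆ splitHull (f i.castSucc) S)
    (hbound : ∀ i, ∀ y ∈ S, f i y ≤ β i)
    (hattained : ∀ i : Fin k, ∃ z ∈ P, f i.castSucc z = β i.castSucc)
    (hupper : ∀ i, ∀ y ∈ S, ω i y ≤ M i)
    (hlower : ∀ i, ∀ z ∈ P, f 0 z = β 0 → -M i ≤ ω i z)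
    (i : Fin k) {x : V} (hx : x ∈ P) (hfx : f i.succ x = β i.succ) :
    f i.castSucc x = β i.castSucc := by
  have descend : ∀ i : Fin k, (∀ z ∈ P, f i.castSucc z = β i.castSucc → f 0 z = β 0) →
      ∀ x ∈ P, f i.succ x = β i.succ → f i.castSucc x = β i.castSucc := by
    intro i hface x hx hfx
    obtain ⟨z, hz, hfz⟩ := hattained i
    exact apply_eq_of_mem_splitHull (hbound i.castSucc) (hupper i) (hf i ▸ hbound i.succ)
      (hP i hz) hfz (hlower i z hz (hface z hz hfz)) (hP i hx) (hf i ▸ hfx)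
  have face_subset_face_zero : ∀ j, ∀ z ∈ P, f j z = β j → f 0 z = β 0 := by
    intro j
    induction j using Fin.induction with
    | zero => exact fun _ _ h => h
    | succ j ih => exact fun z hz h => ih z hz (descend j ih z hz h)
  exact descend i (face_subset_face_zero _) x hx hfx

end SplitHull

lemma IsRationalPolyhedron.convex {n : ℕ} {Q : Set (Fin n → ℝ)} (hQ : IsRationalPolyhedron Q) :
    Convex ℝ Q := by
  obtain ⟨m, A, b, rfl⟩ := hQ
  rw [Set.ofPred_forall]
  exact convex_iInter fun i =>
    convex_halfSpace_le (dotProductBilin ℝ ℝ fun j => (A i j : ℝ)).isLinear (b i : ℝ)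

lemma splitClosureD_subset_splitHull {n : ℕ} {D : Finset (Fin n → ℤ)} {e : Fin n → ℤ}
    (he : e ∈ D) (Q : Set (Fin n → ℝ)) :
    splitClosureD D Q ⊆ splitHull (dotProductBilin ℝ ℝ fun l => (e l : ℝ)) Q :=
  Set.biInter_subset_of_mem he

lemma iterate_splitClosureD_subset {n : ℕ} {D : Finset (Fin n → ℤ)} (hD : D.Nonempty)
    {Q : Set (Fin n → ℝ)} (hQ : Convex ℝ Q) (t : ℕ) : (splitClosureD D)^[t] Q ⊆ Q := by
  obtain ⟨e, he⟩ := hD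
  induction t with
  | zero => exact subset_rfl
  | succ t ih =>
    rw [Function.iterate_succ_apply']
    exact (splitClosureD_subset_splitHull he _).trans (splitHull_subset_of_subset hQ ih)

lemma neg_le_and_le_of_eq_max_ceil {m a b : ℝ}
    (hm : m = max 0 (max (⌈-a⌉ : ℝ) (⌈b⌉ : ℝ))) : -m ≤ a ∧ b ≤ m := by
  subst hm
  constructor
  · rw [neg_le]
    exact (Int.le_ceil _).trans ((le_max_left _ _).trans (le_max_right _ _))
  · exact (Int.le_ceil _).trans ((le_max_right _ _).trans (le_max_right _ _))

theorem box_claim_general {n k : ℕ} {Q : Set (Fin n → ℝ)} (hQ : Convex ℝ Q)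
    {d : Fin (k + 1) → Fin n → ℤ} {w : Fin k → Fin n → ℝ} {M : Fin k → ℝ}
    (hd : ∀ (i : Fin k) l, (d i.succ l : ℝ) = (2 * M i + 1) * d i.castSucc l + w i l)
    {D : Finset (Fin n → ℤ)} (hD : ∀ i, d i ∈ D) {t : ℕ} {γ : Fin (k + 1) → ℤ}
    (hbound : ∀ i, ∀ x ∈ (splitClosureD D)^[t] Q, ∑ l, (d i l : ℝ) * x l ≤ γ i)
    (hattained : ∀ i, ∃ x ∈ (splitClosureD D)^[t + 1] Q, ∑ l, (d i l : ℝ) * x l = γ i)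
    (hupper : ∀ i, ∀ x ∈ Q, ∑ l, w i l * x l ≤ M i)
    (hlower : ∀ i, ∀ x ∈ Q, ∑ l, (d 0 l : ℝ) * x l = γ 0 → -M i ≤ ∑ l, w i l * x l)
    (i : Fin k) :
    {x ∈ (splitClosureD D)^[t + 1] Q | ∑ l, (d i.succ l : ℝ) * x l = γ i.succ} ⊆
      {x | ∑ l, (d i.castSucc l : ℝ) * x l = γ i.castSucc} := by
  have hsub := iterate_splitClosureD_subset ⟨d 0, hD 0⟩ hQ
  rintro x ⟨hx, hdx⟩
  refine apply_castSucc_eq_of_apply_succ_eq (S := (splitClosureD D)^[t] Q)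
    (f := fun i => dotProductBilin ℝ ℝ fun l => (d i l : ℝ))
    (ω := fun i => dotProductBilin ℝ ℝ (w i))
    (fun i => ?_) (fun i => ?_) hbound (fun i => hattained i.castSucc)
    (fun i y hy => hupper i y (hsub t hy)) (fun i z hz => hlower i z (hsub (t + 1) hz)) i hx hdx
  · rw [← map_smul, ← map_add]
    exact congrArg _ (funext (hd i))
  · rw [Function.iterate_succ_apply']
    exact splitClosureD_subset_splitHull (hD i.castSucc) _

/-- Claim 3 of the paper: under the setup (directions `d₀ = c`,
`dᵢ = (2Mᵢ+1)·dᵢ₋₁ + wᵢ`, eventually-constant integral maxima `γ`), for every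
`i ∈ {1, …, k}` one has
`{x ∈ SC_D^{t_D+1}(Q) : dᵢ·x = γ_{dᵢ}} ⊆ {x : dᵢ₋₁·x = γ_{dᵢ₋₁}}`. -/
theorem box_claim
    {n k : ℕ} (hkn : k ≤ n)
    (Q : Set (Fin n → ℝ)) (hQ : IsRationalPolyhedron Q) (hQne : Q.Nonempty)
    (c : Fin n → ℤ) (α : ℝ)
    (hcrec : ∀ r ∈ recCone Q, ∑ i, (c i : ℝ) * r i ≤ 0)
    (hα : {x ∈ Q | α ≤ ∑ i, (c i : ℝ) * x i}.Nonempty)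
    (hFne : {r ∈ recCone Q | ∑ i, (c i : ℝ) * r i = 0}.Nonempty)
    (hk : k = n - Module.finrank ℝ
      (Submodule.span ℝ {r ∈ recCone Q | ∑ i, (c i : ℝ) * r i = 0}))
    (g : Fin k → Fin n → ℝ) (hgind : LinearIndependent ℝ g)
    (hgrec : ∀ j, ∀ r ∈ recCone Q, ∑ i, g j i * r i ≤ 0)
    (hF : {r ∈ recCone Q | ∑ i, (c i : ℝ) * r i = 0} =
          {r ∈ recCone Q | ∀ j, ∑ i, g j i * r i = 0})
    (w : Fin n → Fin n → ℤ)
    (hwbasis : ∀ v : Fin n → ℤ, ∃! lam : Fin n → ℤ, v = ∑ i, lam i • w i)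
    (hwcone : ∀ i : Fin k, ∃ lam : Fin k → ℝ, (∀ j, 0 ≤ lam j) ∧
        (fun l => (w (Fin.castLE hkn i) l : ℝ)) = ∑ j, lam j • g j)
    (μ ν : Fin k → ℝ)
    (hμ : ∀ i, IsLeast ((fun x => ∑ l, (w (Fin.castLE hkn i) l : ℝ) * x l) ''
            {x ∈ Q | α ≤ ∑ i, (c i : ℝ) * x i}) (μ i))
    (hν : ∀ i, IsGreatest ((fun x => ∑ l, (w (Fin.castLE hkn i) l : ℝ) * x l) '' Q) (ν i))
    (M : Fin k → ℤ) (hM : ∀ i, (M i : ℝ) = max 0 (max (⌈-μ i⌉ : ℝ) (⌈ν i⌉ : ℝ)))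
    (d : Fin (k + 1) → Fin n → ℤ)
    (hd0 : d 0 = c)
    (hdi : ∀ i : Fin k, d i.succ = (2 * M i + 1) • d i.castSucc + w (Fin.castLE hkn i))
    (D : Finset (Fin n → ℤ)) (hD : D = Finset.image d Finset.univ)
    (hne : ∀ t : ℕ, ((splitClosureD D)^[t] Q).Nonempty)
    (u : ℕ → (Fin n → ℤ) → ℝ)
    (hu : ∀ t : ℕ, ∀ e ∈ D,
      IsGreatest ((fun x => ∑ i, (e i : ℝ) * x i) '' (splitClosureD D)^[t] Q) (u t e))
    (tD : ℕ) (γ : Fin (k + 1) → ℤ)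
    (hγ : ∀ i : Fin (k + 1), ∀ t ≥ tD, u t (d i) = (γ i : ℝ))
    (hγ0 : α ≤ (γ 0 : ℝ)) :
    ∀ i : Fin k,
      {x ∈ (splitClosureD D)^[tD + 1] Q |
          ∑ l, (d i.succ l : ℝ) * x l = (γ i.succ : ℝ)} ⊆
        {x : Fin n → ℝ | ∑ l, (d i.castSucc l : ℝ) * x l = (γ i.castSucc : ℝ)} := by
  have hdD : ∀ i, d i ∈ D := fun i => hD ▸ Finset.mem_image_of_mem d (Finset.mem_univ i)
  have hmax : ∀ i, ∀ t ≥ tD, IsGreatest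
      ((fun x => ∑ l, (d i l : ℝ) * x l) '' (splitClosureD D)^[t] Q) (γ i : ℝ) :=
    fun i t ht => hγ i t ht ▸ hu t (d i) (hdD i)
  have hbox := fun i => neg_le_and_le_of_eq_max_ceil (hM i)
  exact box_claim_general hQ.convex (fun i l => by simp [hdi]) hdD
    (fun i x hx => (hmax i tD le_rfl).2 ⟨x, hx, rfl⟩) (fun i => (hmax i (tD + 1) (by omega)).1)
    (fun i x hx => ((hν i).2 ⟨x, hx, rfl⟩).trans (hbox i).2)
    (fun i x hx hx0 => (hbox i).1.trans ((hμ i).2 ⟨x, ⟨hx, by rw [← hd0, hx0]; exact hγ0⟩, rfl⟩))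
end
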